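/- Let n ≥ 4 be a natural number. The genus-zero Hurwitz number h_{3^1} with one degenerate branch point of reduced ramification type 3^1 (i.e., one permutation of cycle type (4,1^{n-4})) and m = 2n−5 simple branch points satisfies h_{3^1} = (32/3)·((2n−5)!/(n−4)!)·n^{n−6}. -/

import Mathlib

open Equiv

/-!
Let `N m σ P` be the number of words of `m` transpositions with product `σ` whose transpositions
generate exactly the partition `P`. If `σ` is an `l`-cycle, `P` is a block of `l + E` points
containing it, and `m = l + 2 * E - 1` is the minimal length, then `N m σ P = m! * E! * ν l E` with
`ν l E = l ^ (l + 1) / l! * (l + E) ^ (E - 2) / E!`. The Hurwitz number is the case where the block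
is everything, summed over the `r`-cycles `σ`.

Fix a point `p`. In the group algebra of permutations decorated by partitions, the sum of all
transpositions is the sum of those moving `p` and of those fixing `p`, and these two sums commute.
Hence words may be counted with all `k` transpositions moving `p` in front, and multiplying by one
of these cuts the cycle of `p` or joins it to a fixed point. By induction on the number of points,
the resulting counts `(m - k)! * E! * γ l E k` satisfy a recursion in `k` driven by `ν`, and the
formula becomes the identity `∑ k, γ l E k / k! = ν l E`.

For this identity let `z` mark `l` and `y` mark `E`, and substitute `y = T * exp (-T)`,
`z = Y * exp (-Y - T)`. The recursion then becomes multiplication by `Y + T + T / Y` followed by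
discarding the nonpositive powers of `Y`, which the reflection principle `Y ↔ T / Y` solves in
closed form.
-/

namespace HurwitzNumber

section ChangeOfVariables

open PowerSeries

variable {R : Type*} [CommRing R]

/-- The substitution `f(X) ↦ f(X * u(X))`. -/
noncomputable def substXMul (u : R⟦X⟧) : R⟦X⟧ →+* R⟦X⟧ :=
  (substAlgHom (R := R) (HasSubst.of_constantCoeff_zero' (a := X * u) (by simp))).toRingHom

@[simp]
lemma substXMul_X (u : R⟦X⟧) : substXMul u X = X * u :=
  substAlgHom_X _

@[simp]
lemma substXMul_C (u : R⟦X⟧) (r : R) : substXMul u (C r) = C r :=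
  (substAlgHom (R := R) (HasSubst.of_constantCoeff_zero' (a := X * u) (by simp))).commutes r

lemma coeff_substXMul_mul (u f g : R⟦X⟧) (n : ℕ) :
    coeff n (substXMul u f * g) =
      ∑ j ∈ Finset.range (n + 1), coeff j f * coeff (n - j) (u ^ j * g) := by
  have hf : substXMul u f =
      (X * u) ^ (n + 1) * substXMul u (PowerSeries.mk fun i ↦ coeff (i + (n + 1)) f) +
        ∑ j ∈ Finset.range (n + 1), C (coeff j f) * (X * u) ^ j := by
    conv_lhs => rw [eq_X_pow_mul_shift_add_trunc (n + 1) f]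
    rw [← Polynomial.coeToPowerSeries.ringHom_apply, trunc_apply, Nat.Ico_zero_eq_range]
    simp only [Polynomial.coeToPowerSeries.ringHom_apply, Polynomial.coe_monomial,
      monomial_eq_C_mul_X_pow, map_add, map_mul, map_pow, map_sum, substXMul_X, substXMul_C]
  rw [hf, add_mul, map_add, mul_pow, mul_assoc, mul_assoc, coeff_X_pow_mul', if_neg (by lia),
    zero_add, Finset.sum_mul, map_sum]
  refine Finset.sum_congr rfl fun j hj ↦ ?_
  rw [mul_pow, mul_assoc, mul_assoc, coeff_C_mul, coeff_X_pow_mul',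
    if_pos (Finset.mem_range_succ_iff.1 hj)]

/-- The power series `exp (-X)`. -/
noncomputable def expNeg (R : Type*) [CommRing R] [Algebra ℚ R] : R⟦X⟧ :=
  evalNegHom (exp R)

lemma exp_mul_expNeg (R : Type*) [CommRing R] [Algebra ℚ R] : exp R * expNeg R = 1 :=
  exp_mul_exp_neg_eq_one

lemma coeff_expNeg_pow (R : Type*) [CommRing R] [Algebra ℚ R] (j n : ℕ) :
    coeff n (expNeg R ^ j) = algebraMap ℚ R ((-j) ^ n / n.factorial) := by
  rw [expNeg, ← map_pow, exp_pow_eq_rescale_exp, evalNegHom, rescale_rescale, coeff_rescale,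
    coeff_exp]
  simp [div_eq_mul_inv]

/-- The change of variables `y = T e^{-T}`, `z = Y e^{-Y-T}`, sending a power series in `z` over
power series in `y` to one in `Y` over power series in `T`. -/
noncomputable def changeOfVariables : ℚ⟦X⟧⟦X⟧ →+* ℚ⟦X⟧⟦X⟧ :=
  (substXMul (expNeg ℚ⟦X⟧ * C (expNeg ℚ))).comp (PowerSeries.map (substXMul (expNeg ℚ)))

@[simp]
lemma changeOfVariables_X : changeOfVariables X = X * (expNeg ℚ⟦X⟧ * C (expNeg ℚ)) := by
  simp [changeOfVariables]

@[simp]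
lemma changeOfVariables_C (f : ℚ⟦X⟧) :
    changeOfVariables (C f) = C (substXMul (expNeg ℚ) f) := by
  simp [changeOfVariables]

lemma coeff_changeOfVariables (f : ℚ⟦X⟧⟦X⟧) (a : ℕ) :
    coeff a (changeOfVariables f) = ∑ l ∈ Finset.range (a + 1),
      substXMul (expNeg ℚ) (coeff l f) * expNeg ℚ ^ l *
        C ((-l : ℚ) ^ (a - l) / (a - l).factorial) := by
  rw [changeOfVariables, RingHom.comp_apply, ← mul_one (substXMul _ _), coeff_substXMul_mul]
  refine Finset.sum_congr rfl fun l _ ↦ ?_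
  rw [mul_one, mul_pow, ← map_pow, coeff_mul_C, coeff_expNeg_pow, coeff_map, mul_assoc,
    mul_comm (expNeg ℚ ^ l)]
  rfl

lemma coeff_substXMul_expNeg_mul_pow (f : ℚ⟦X⟧) (l b : ℕ) :
    coeff b (substXMul (expNeg ℚ) f * expNeg ℚ ^ l) =
      ∑ j ∈ Finset.range (b + 1), coeff j f * ((-(l + j)) ^ (b - j) / (b - j).factorial) := by
  rw [coeff_substXMul_mul]
  refine Finset.sum_congr rfl fun j _ ↦ ?_
  rw [← pow_add, coeff_expNeg_pow]
  simp [add_comm]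

lemma coeff_coeff_changeOfVariables (f : ℚ⟦X⟧⟦X⟧) (a b : ℕ) :
    coeff b (coeff a (changeOfVariables f)) =
      ∑ l ∈ Finset.range (a + 1), ∑ j ∈ Finset.range (b + 1), coeff j (coeff l f) *
        ((-(l + j)) ^ (b - j) / (b - j).factorial * ((-l) ^ (a - l) / (a - l).factorial)) := by
  simp only [coeff_changeOfVariables, map_sum, coeff_mul_C, coeff_substXMul_expNeg_mul_pow,
    Finset.sum_mul]
  simp only [mul_assoc]

lemma coeff_zero_changeOfVariables {f : ℚ⟦X⟧⟦X⟧} (hf : coeff 0 f = 0) :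
    coeff 0 (changeOfVariables f) = 0 := by
  simp [coeff_changeOfVariables, hf]

/-- The substitution is triangular with unit diagonal. -/
lemma changeOfVariables_injective : Function.Injective changeOfVariables := by
  rw [injective_iff_map_eq_zero]
  intro f hf
  suffices h : ∀ N a b, a + b = N → coeff b (coeff a f) = 0 by
    ext a b
    simpa using h _ a b rfl
  intro N
  induction N using Nat.strong_induction_on with
  | _ N ih =>
    intro a b hab
    have hsum := coeff_coeff_changeOfVariables f a b
    rw [hf, map_zero, map_zero, Finset.sum_eq_single a, Finset.sum_eq_single b] at hsum
    · simpa using hsum.symm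
    · intro j hj hne
      rw [Finset.mem_range] at hj
      rw [ih (a + j) (by lia) a j rfl, zero_mul]
    · simp
    · intro l hl hne
      refine Finset.sum_eq_zero fun j hj ↦ ?_
      rw [Finset.mem_range] at hj hl
      rw [ih (l + j) (by lia) l j rfl, zero_mul]
    · simp

end ChangeOfVariables

section HurwitzSeries

open PowerSeries

lemma sum_neg_one_pow_div_factorial_mul_add_pow {N j : ℕ} (h : j < N) (c : ℚ) :
    ∑ k ∈ Finset.range (N + 1),
      (-1) ^ (N - k) / (k.factorial * (N - k).factorial) * (c + k) ^ j = 0 := by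
  have hdiff := congrFun (fwdDiff_iter_pow_eq_zero_of_lt (R := ℚ) h) c
  rw [fwdDiff_iter_eq_sum_shift] at hdiff
  have hN : (N.factorial : ℚ) ≠ 0 := by positivity
  refine (mul_eq_zero.1 ?_).resolve_left hN
  rw [Finset.mul_sum, ← Pi.zero_apply (M := fun _ ↦ ℚ) c, ← hdiff]
  refine Finset.sum_congr rfl fun k hk ↦ ?_
  simp only [zsmul_eq_mul, Int.cast_mul, Int.cast_pow, Int.cast_neg, Int.cast_one,
    Int.cast_natCast, nsmul_one, Nat.cast_choose ℚ (Finset.mem_range_succ_iff.1 hk)]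
  field_simp

/-- The normalized Hurwitz number: `m! * E! * hurwitzCoeff l E` counts the factorizations of an
`l`-cycle on `l + E` points into a transitive product of `m = l + 2 * E - 1` transpositions. -/
noncomputable def hurwitzCoeff (l E : ℕ) : ℚ :=
  l ^ (l + 1) / l.factorial * (l + E : ℚ) ^ ((E : ℤ) - 2) / E.factorial

@[simp]
lemma hurwitzCoeff_zero_left (E : ℕ) : hurwitzCoeff 0 E = 0 := by
  simp [hurwitzCoeff]

/-- The generating series of `hurwitzCoeff l E`, with `l` marked by the outer variable `z` and `E`
by the inner variable `y`. -/
noncomputable def hurwitzSeries : ℚ⟦X⟧⟦X⟧ :=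
  PowerSeries.mk fun l ↦ PowerSeries.mk fun E ↦ hurwitzCoeff l E

lemma coeff_coeff_hurwitzSeries (l E : ℕ) :
    coeff E (coeff l hurwitzSeries) = hurwitzCoeff l E := by
  simp [hurwitzSeries]

@[simp]
lemma coeff_zero_hurwitzSeries : coeff 0 hurwitzSeries = 0 := by
  ext E
  simp [coeff_coeff_hurwitzSeries, -coeff_zero_eq_constantCoeff]

lemma coeff_zero_substXMul_hurwitzSeries (l : ℕ) :
    coeff 0 (substXMul (expNeg ℚ) (coeff (l + 1) hurwitzSeries) * expNeg ℚ ^ (l + 1)) =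
      (l + 1) ^ l / (l + 1).factorial := by
  have hl : (l + 1 : ℚ) ≠ 0 := by positivity
  rw [coeff_substXMul_expNeg_mul_pow, Finset.sum_range_one, coeff_coeff_hurwitzSeries, hurwitzCoeff]
  push_cast
  simp
  field_simp
  ring

lemma coeff_one_substXMul_hurwitzSeries (l : ℕ) :
    coeff 1 (substXMul (expNeg ℚ) (coeff (l + 1) hurwitzSeries) * expNeg ℚ ^ (l + 1)) =
      -(l + 1) ^ (l + 1) / (l + 2).factorial := by
  have hl : (l + 1 : ℚ) ≠ 0 := by positivity
  have hl' : (l + 1 + 1 : ℚ) ≠ 0 := by positivity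
  rw [coeff_substXMul_expNeg_mul_pow, Finset.sum_range_succ, Finset.sum_range_one,
    coeff_coeff_hurwitzSeries, coeff_coeff_hurwitzSeries, hurwitzCoeff, hurwitzCoeff,
    Nat.factorial_succ (l + 1)]
  push_cast
  simp
  field_simp
  ring

lemma coeff_substXMul_hurwitzSeries_of_two_le (l : ℕ) {b : ℕ} (hb : 2 ≤ b) :
    coeff b (substXMul (expNeg ℚ) (coeff l hurwitzSeries) * expNeg ℚ ^ l) = 0 := by
  rcases l.eq_zero_or_pos with rfl | hl
  · simp
  rw [coeff_substXMul_expNeg_mul_pow, ← mul_zero ((l : ℚ) ^ (l + 1) / l.factorial),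
    ← sum_neg_one_pow_div_factorial_mul_add_pow (show b - 2 < b by lia) l, Finset.mul_sum]
  refine Finset.sum_congr rfl fun j hj ↦ ?_
  have hj : j ≤ b := Finset.mem_range_succ_iff.1 hj
  have hpow : (l + j : ℚ) ^ ((j : ℤ) - 2) * (l + j) ^ (b - j) = (l + j : ℚ) ^ (b - 2) := by
    rw [← zpow_natCast, ← zpow_natCast, ← zpow_add₀ (by positivity)]
    congr 1
    lia
  rw [coeff_coeff_hurwitzSeries, hurwitzCoeff, neg_pow, ← hpow]
  field_simp

lemma coeff_zero_coeff_changeOfVariables_hurwitzSeries (a : ℕ) :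
    coeff 0 (coeff a (changeOfVariables hurwitzSeries)) = if a = 1 then 1 else 0 := by
  rw [coeff_changeOfVariables, Finset.sum_range_succ', coeff_zero_hurwitzSeries, map_zero, zero_mul,
    zero_mul, add_zero, map_sum]
  simp only [coeff_mul_C, coeff_zero_substXMul_hurwitzSeries]
  rcases a with _ | _ | a
  · simp
  · simp
  rw [if_neg (by lia), ← sum_neg_one_pow_div_factorial_mul_add_pow (show a + 1 < a + 2 by lia) 0,
    Finset.sum_range_succ' _ (a + 2)]
  simp only [Nat.cast_zero, add_zero, zero_add, zero_pow (Nat.succ_ne_zero a), mul_zero]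
  refine Finset.sum_congr rfl fun l hl ↦ ?_
  have hpow : ((l + 1 : ℕ) : ℚ) ^ (a + 1) = (l + 1) ^ l * (l + 1) ^ (a + 2 - (l + 1)) := by
    rw [← pow_add, Nat.cast_succ]
    congr 1
    have := Finset.mem_range.1 hl
    lia
  rw [hpow, neg_pow, Nat.cast_succ]
  field_simp

lemma coeff_one_coeff_changeOfVariables_hurwitzSeries {a : ℕ} (ha : 1 ≤ a) :
    coeff 1 (coeff a (changeOfVariables hurwitzSeries)) = -1 / (a + 1).factorial := by
  have hdiff : ∑ l ∈ Finset.range a, (-1 : ℚ) ^ (a - (l + 1)) /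
      ((l + 2).factorial * (a - (l + 1)).factorial) * (l + 1) ^ a = 1 / (a + 1).factorial := by
    have h := sum_neg_one_pow_div_factorial_mul_add_pow (show a < a + 1 by lia) (-1)
    rw [Finset.sum_range_succ', Finset.sum_range_succ'] at h
    have hsign : (-1 : ℚ) ^ a * (-1) ^ a = 1 := by rw [← mul_pow]; simp
    simp [Nat.one_le_iff_ne_zero.1 ha, pow_succ] at h
    linear_combination h + 1 / ((a + 1).factorial : ℚ) * hsign
  rw [coeff_changeOfVariables, Finset.sum_range_succ', coeff_zero_hurwitzSeries, map_zero, zero_mul,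
    zero_mul, add_zero, map_sum, neg_div, ← hdiff, ← Finset.sum_neg_distrib]
  refine Finset.sum_congr rfl fun l hl ↦ ?_
  have hpow : (l + 1 : ℚ) ^ a = (l + 1) ^ (l + 1) * (l + 1) ^ (a - (l + 1)) := by
    rw [← pow_add, Nat.add_sub_cancel' (Finset.mem_range.1 hl)]
  rw [coeff_mul_C, coeff_one_substXMul_hurwitzSeries, hpow, neg_pow, Nat.cast_succ]
  field_simp

lemma coeff_coeff_changeOfVariables_hurwitzSeries_of_two_le (a : ℕ) {b : ℕ} (hb : 2 ≤ b) :
    coeff b (coeff a (changeOfVariables hurwitzSeries)) = 0 := by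
  simp only [coeff_changeOfVariables, map_sum, coeff_mul_C,
    coeff_substXMul_hurwitzSeries_of_two_le _ hb, zero_mul, Finset.sum_const_zero]

/-- In the new variables the generating series is `Y + T + T / Y - T * exp Y / Y`. -/
lemma X_mul_changeOfVariables_hurwitzSeries :
    X * changeOfVariables hurwitzSeries + C X * exp ℚ⟦X⟧ = X ^ 2 + C X * X + C X := by
  have hexp (n : ℕ) : coeff n (C X * exp ℚ⟦X⟧) = X * C (1 / n.factorial : ℚ) := by
    rw [coeff_C_mul, coeff_exp]
    rfl
  ext a b
  rcases a with _ | _ | a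
  · simp [coeff_X]
  · rw [map_add, zero_add, coeff_succ_X_mul _ (changeOfVariables _),
      coeff_zero_changeOfVariables coeff_zero_hurwitzSeries]
    simp [coeff_X_pow]
  have hright : coeff (a + 1 + 1) (X ^ 2 + C X * X + C X : ℚ⟦X⟧⟦X⟧) = if a = 0 then 1 else 0 := by
    simp [coeff_X_pow]
  rw [map_add, coeff_succ_X_mul _ (changeOfVariables _), hexp, hright, map_add, coeff_mul_C,
    coeff_X]
  rcases b with _ | _ | b
  · rw [coeff_zero_coeff_changeOfVariables_hurwitzSeries]
    split_ifs <;> simp_all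
  · rw [zero_add, coeff_one_coeff_changeOfVariables_hurwitzSeries (by lia), if_pos rfl]
    split_ifs <;> simp [coeff_one, neg_div]
  · rw [coeff_coeff_changeOfVariables_hurwitzSeries_of_two_le _ (by lia)]
    split_ifs <;> simp_all [coeff_one]

end HurwitzSeries

section StarSeries

open PowerSeries
open Finset.HasAntidiagonal (antidiagonal mem_antidiagonal)

/-- The generating series of the numbers of factorizations whose first `k` transpositions all move
a base point of the cycle. By induction, such a transposition either cuts the cycle in two (the
product with `hurwitzSeries`) or joins it to a fixed point (the shift of the coefficients). -/
noncomputable def starSeries : ℕ → ℚ⟦X⟧⟦X⟧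
  | 0 => X
  | k + 1 => hurwitzSeries * starSeries k +
      PowerSeries.mk fun l ↦ if l = 0 then 0 else X * coeff (l + 1) (starSeries k)

/-- The normalized number of factorizations of an `l`-cycle on `l + E` points whose first `k`
transpositions all move a base point of the cycle. The normalization divides by `m! * E!`, where
`m = l + 2 * E - 1 - k` is the number of the other transpositions. -/
noncomputable def starCoeff (l E k : ℕ) : ℚ :=
  coeff E (coeff l (starSeries k))

lemma coeff_zero_starSeries (k : ℕ) : coeff 0 (starSeries k) = 0 := by
  cases k with
  | zero => exact coeff_zero_X
  | succ k => simp [starSeries, coeff_zero_hurwitzSeries, -coeff_zero_eq_constantCoeff, coeff_mul]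

lemma starCoeff_zero_left (E k : ℕ) : starCoeff 0 E k = 0 := by
  rw [starCoeff, coeff_zero_starSeries, map_zero]

lemma starCoeff_zero_right (l E : ℕ) : starCoeff l E 0 = if l = 1 ∧ E = 0 then 1 else 0 := by
  by_cases hl : l = 1 <;> simp [starCoeff, starSeries, coeff_X, coeff_one, hl]

lemma starCoeff_succ (l E k : ℕ) :
    starCoeff (l + 1) E (k + 1) =
      (∑ i ∈ antidiagonal (l + 1), ∑ j ∈ antidiagonal E,
        hurwitzCoeff i.1 j.1 * starCoeff i.2 j.2 k) +
      if E = 0 then 0 else starCoeff (l + 2) (E - 1) k := by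
  rw [starCoeff, starSeries, map_add, map_add, coeff_mk, if_neg l.succ_ne_zero, coeff_mul, map_sum]
  congr 1
  · simp only [coeff_mul, coeff_coeff_hurwitzSeries, starCoeff]
  · cases E with
    | zero => simp
    | succ E => rw [coeff_succ_X_mul, if_neg E.succ_ne_zero, Nat.add_sub_cancel, starCoeff]

lemma starCoeff_eq_zero {l E k : ℕ} (h : l + 2 * E ≤ k) : starCoeff l E k = 0 := by
  induction k generalizing l E with
  | zero => rw [starCoeff_zero_right, if_neg (by lia)]
  | succ k ih =>
    rcases l with _ | l
    · exact starCoeff_zero_left _ _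
    rw [starCoeff_succ, Finset.sum_eq_zero, zero_add]
    · split_ifs
      · rfl
      · exact ih (by lia)
    intro i hi
    refine Finset.sum_eq_zero fun j hj ↦ ?_
    rw [mem_antidiagonal] at hi hj
    rcases i.1.eq_zero_or_pos with h0 | h0
    · rw [h0, hurwitzCoeff_zero_left, zero_mul]
    · rw [ih (by lia), mul_zero]

lemma X_mul_starSeries_succ (k : ℕ) :
    X * starSeries (k + 1) = X * hurwitzSeries * starSeries k +
      C X * (starSeries k - C (coeff 1 (starSeries k)) * X) := by
  ext1 l
  rcases l with _ | l
  · rw [map_add, coeff_C_mul, map_sub, coeff_zero_starSeries]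
    simp
  rw [mul_assoc, map_add, coeff_succ_X_mul, coeff_succ_X_mul, starSeries, map_add, coeff_mk,
    coeff_C_mul, map_sub, coeff_C_mul, coeff_X]
  rcases l with _ | l <;> simp

lemma exists_X_mul_changeOfVariables_starSeries_succ (k : ℕ) :
    ∃ d : ℚ⟦X⟧, X * changeOfVariables (starSeries (k + 1)) =
      (X ^ 2 + C X * X + C X) * changeOfVariables (starSeries k) - C d * X := by
  refine ⟨X * expNeg ℚ * substXMul (expNeg ℚ) (coeff 1 (starSeries k)), ?_⟩
  have hrec := congrArg (exp ℚ⟦X⟧ * C (exp ℚ) * changeOfVariables ·) (X_mul_starSeries_succ k)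
  have hexpT : (C (exp ℚ) * C (expNeg ℚ) : ℚ⟦X⟧⟦X⟧) = 1 := by
    rw [← map_mul, exp_mul_expNeg, map_one]
  have hexp : exp ℚ⟦X⟧ * expNeg ℚ⟦X⟧ * (C (exp ℚ) * C (expNeg ℚ)) = 1 := by
    rw [exp_mul_expNeg, hexpT, one_mul]
  simp only [map_add, map_mul, map_sub, changeOfVariables_X, changeOfVariables_C, substXMul_X]
    at hrec
  rw [← X_mul_changeOfVariables_hurwitzSeries]
  simp only [map_mul]
  generalize changeOfVariables (starSeries (k + 1)) = w' at *
  generalize changeOfVariables (starSeries k) = w at *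
  generalize (C (substXMul (expNeg ℚ) (coeff 1 (starSeries k))) : ℚ⟦X⟧⟦X⟧) = c at *
  linear_combination hrec + (X * changeOfVariables hurwitzSeries * w - X * w'
    - C X * C (expNeg ℚ) * c * X) * hexp + C X * exp ℚ⟦X⟧ * w * hexpT

lemma coeff_succ_changeOfVariables_starSeries_succ (k a : ℕ) :
    coeff (a + 1) (changeOfVariables (starSeries (k + 1))) =
      coeff a (changeOfVariables (starSeries k)) +
        X * coeff (a + 1) (changeOfVariables (starSeries k)) +
        X * coeff (a + 2) (changeOfVariables (starSeries k)) := by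
  obtain ⟨d, hd⟩ := exists_X_mul_changeOfVariables_starSeries_succ k
  have h := congrArg (coeff (a + 2)) hd
  rwa [show (X ^ 2 + C X * X + C X) * changeOfVariables (starSeries k) - C d * X =
      X * (X * changeOfVariables (starSeries k)) + C X * (X * changeOfVariables (starSeries k)) +
        C X * changeOfVariables (starSeries k) - C d * X by ring,
    coeff_succ_X_mul, map_sub, map_add, map_add, coeff_succ_X_mul, coeff_succ_X_mul, coeff_C_mul,
    coeff_C_mul, coeff_succ_X_mul, coeff_C_mul, coeff_X, if_neg (by lia), mul_zero, sub_zero] at h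

lemma coeff_coeff_succ_changeOfVariables_starSeries_zero (a b : ℕ) :
    coeff b (coeff (a + 1) (changeOfVariables (starSeries 0))) =
      (-1) ^ a / a.factorial * ((-1) ^ b / b.factorial) := by
  have ha := coeff_expNeg_pow ℚ⟦X⟧ 1 a
  have hb := coeff_expNeg_pow ℚ 1 b
  rw [pow_one] at ha hb
  rw [starSeries, changeOfVariables_X, coeff_succ_X_mul, coeff_mul_C, ha,
    show ∀ q : ℚ, algebraMap ℚ ℚ⟦X⟧ q = C q from fun _ ↦ rfl, coeff_C_mul, hb]
  simp

end StarSeries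

section ReflectionPolynomials

open Polynomial
open Finset.HasAntidiagonal (antidiagonal)

/-- The divided power `(τ - c)^i / i!`. -/
noncomputable def divPow (c : ℚ) (i : ℕ) : ℚ[X] :=
  C (1 / (i.factorial : ℚ)) * (X - C c) ^ i

lemma divPow_zero (c : ℚ) : divPow c 0 = 1 := by
  simp [divPow]

lemma derivative_divPow_zero (c : ℚ) : derivative (divPow c 0) = 0 := by
  rw [divPow_zero, derivative_one]

lemma derivative_divPow_succ (c : ℚ) (i : ℕ) : derivative (divPow c (i + 1)) = divPow c i := by
  have hi : (i.factorial : ℚ) ≠ 0 := by positivity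
  simp only [divPow, derivative_C_mul, derivative_pow, derivative_sub, derivative_X, derivative_C,
    sub_zero, mul_one, Nat.add_sub_cancel, ← mul_assoc, ← C_mul, Nat.factorial_succ]
  congr 2
  push_cast
  field_simp

lemma eval_divPow_self (c : ℚ) (i : ℕ) : (divPow c i).eval c = if i = 0 then 1 else 0 := by
  cases i <;> simp [divPow]

lemma eval_derivative_divPow_self (c : ℚ) (i : ℕ) :
    (derivative (divPow c i)).eval c = if i = 1 then 1 else 0 := by
  cases i <;> simp [derivative_divPow_zero, derivative_divPow_succ, eval_divPow_self]

/-- The coefficient of `Y^a T^b` in `Y e^{(τ-1)Y} e^{τT/Y} - (T/Y) e^{(τ-1)T/Y} e^{τY}`, which is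
antisymmetric under the reflection `Y ↦ T/Y`. -/
noncomputable def reflectionPoly (a b : ℕ) : ℚ[X] :=
  derivative (divPow 1 (a + b)) * divPow 0 b - divPow 0 (a + b) * derivative (divPow 1 b)

lemma reflectionPoly_zero_left (b : ℕ) : reflectionPoly 0 b = 0 := by
  simp [reflectionPoly, mul_comm]

lemma derivative_reflectionPoly_succ_zero (a : ℕ) :
    derivative (reflectionPoly (a + 1) 0) = reflectionPoly a 0 := by
  simp only [reflectionPoly, add_zero, derivative_sub, derivative_mul, derivative_divPow_succ,
    derivative_divPow_zero, derivative_zero, mul_zero]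

lemma derivative_reflectionPoly_succ_succ (a b : ℕ) :
    derivative (reflectionPoly (a + 1) (b + 1)) =
      reflectionPoly a (b + 1) + reflectionPoly (a + 2) b := by
  simp only [reflectionPoly, show a + 1 + (b + 1) = (a + b + 1) + 1 by ring,
    show a + (b + 1) = a + b + 1 by ring, show a + 2 + b = a + b + 1 + 1 by ring,
    derivative_sub, derivative_mul, derivative_divPow_succ]
  ring

/-- The coefficient of `Y^a T^b` in the product of `e^{(τ-1)T}` with the antisymmetric series of
`reflectionPoly`. It is the exponential generating polynomial in `τ` of the coefficients of the
series `changeOfVariables (starSeries k)`. -/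
noncomputable def starPoly (a b : ℕ) : ℚ[X] :=
  ∑ i ∈ antidiagonal b, divPow 1 i.1 * reflectionPoly a i.2

lemma starPoly_zero_left (b : ℕ) : starPoly 0 b = 0 := by
  simp [starPoly, reflectionPoly_zero_left]

lemma derivative_starPoly_succ_zero (a : ℕ) :
    derivative (starPoly (a + 1) 0) = starPoly a 0 := by
  simp [starPoly, derivative_reflectionPoly_succ_zero, divPow_zero]

lemma derivative_starPoly_succ_succ (a b : ℕ) :
    derivative (starPoly (a + 1) (b + 1)) =
      starPoly a (b + 1) + starPoly (a + 1) b + starPoly (a + 2) b := by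
  have hsplit : starPoly a (b + 1) = divPow 1 (b + 1) * reflectionPoly a 0 +
      ∑ i ∈ antidiagonal b, divPow 1 i.1 * reflectionPoly a (i.2 + 1) := by
    rw [starPoly, Finset.Nat.sum_antidiagonal_succ']
  rw [hsplit, starPoly]
  simp only [derivative_sum, derivative_mul, Finset.sum_add_distrib]
  rw [Finset.Nat.sum_antidiagonal_succ, Finset.Nat.sum_antidiagonal_succ']
  simp only [derivative_reflectionPoly_succ_succ, derivative_reflectionPoly_succ_zero,
    derivative_divPow_zero, derivative_divPow_succ, mul_add, Finset.sum_add_distrib, starPoly]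
  ring

lemma coeff_zero_starPoly_succ (a b : ℕ) :
    (starPoly (a + 1) b).coeff 0 = (-1) ^ a / a.factorial * ((-1) ^ b / b.factorial) := by
  rw [coeff_zero_eq_eval_zero, starPoly, eval_finsetSum, Finset.sum_eq_single (b, 0)]
  · rw [reflectionPoly, add_zero, derivative_divPow_succ, derivative_divPow_zero]
    simp [divPow]
    ring
  · rintro ⟨i, j⟩ hi hne
    have hj : j ≠ 0 := by
      rintro rfl
      simp_all
    obtain ⟨j, rfl⟩ := Nat.exists_eq_succ_of_ne_zero hj
    simp [reflectionPoly, divPow]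
  · simp

lemma eval_one_starPoly (a b : ℕ) :
    (starPoly a b).eval 1 = PowerSeries.coeff b
      (PowerSeries.coeff a (changeOfVariables hurwitzSeries)) := by
  rcases a with _ | a
  · rw [starPoly_zero_left, coeff_zero_changeOfVariables coeff_zero_hurwitzSeries]
    simp
  have heval : (starPoly (a + 1) b).eval 1 = (reflectionPoly (a + 1) b).eval 1 := by
    rw [starPoly, eval_finsetSum, Finset.sum_eq_single (0, b)]
    · simp [divPow_zero]
    · rintro ⟨i, j⟩ hi hne
      have hi : i ≠ 0 := by
        rintro rfl
        simp_all
      simp [eval_divPow_self, hi]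
    · simp
  rw [heval, reflectionPoly, eval_sub, eval_mul, eval_mul, eval_derivative_divPow_self,
    eval_derivative_divPow_self]
  rcases b with _ | _ | b
  · rw [coeff_zero_coeff_changeOfVariables_hurwitzSeries]
    simp [divPow]
  · rw [zero_add, coeff_one_coeff_changeOfVariables_hurwitzSeries (by lia)]
    simp [divPow, neg_div]
  · rw [coeff_coeff_changeOfVariables_hurwitzSeries_of_two_le _ (by lia)]
    simp [divPow]
    lia

end ReflectionPolynomials

section SumStarCoeff

open PowerSeries

lemma coeff_coeff_changeOfVariables_starSeries (a b k : ℕ) :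
    coeff b (coeff a (changeOfVariables (starSeries k))) =
      k.factorial * (starPoly a b).coeff k := by
  have hzero (k b : ℕ) : coeff b (coeff 0 (changeOfVariables (starSeries k))) =
      k.factorial * (starPoly 0 b).coeff k := by
    rw [coeff_zero_changeOfVariables (coeff_zero_starSeries k), starPoly_zero_left]
    simp
  induction k generalizing a b with
  | zero =>
    rcases a with _ | a
    · exact hzero 0 b
    rw [coeff_coeff_succ_changeOfVariables_starSeries_zero, coeff_zero_starPoly_succ]
    simp
  | succ k ih =>
    rcases a with _ | a
    · exact hzero (k + 1) b
    have hder := Polynomial.coeff_derivative (starPoly (a + 1) b) k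
    rw [coeff_succ_changeOfVariables_starSeries_succ, Nat.factorial_succ, Nat.cast_mul,
      Nat.cast_succ]
    rcases b with _ | b
    · rw [derivative_starPoly_succ_zero] at hder
      simp only [map_add, ih, coeff_zero_X_mul, hder]
      ring
    · rw [derivative_starPoly_succ_succ, Polynomial.coeff_add, Polynomial.coeff_add] at hder
      simp only [map_add, ih, coeff_succ_X_mul]
      linear_combination (k.factorial : ℚ) * hder

/-- The series `∑ k, starSeries k / k!`, in which each coefficient is a finite sum. -/
noncomputable def starSumSeries : ℚ⟦X⟧⟦X⟧ :=
  PowerSeries.mk fun l ↦ PowerSeries.mk fun E ↦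
    ∑ k ∈ Finset.range (l + 2 * E), starCoeff l E k / k.factorial

lemma sum_range_starCoeff {l E K : ℕ} (h : l + 2 * E ≤ K) :
    ∑ k ∈ Finset.range (l + 2 * E), starCoeff l E k / k.factorial =
      ∑ k ∈ Finset.range K, starCoeff l E k / k.factorial := by
  refine Finset.sum_subset (Finset.range_subset_range.2 h) fun k _ hk ↦ ?_
  rw [starCoeff_eq_zero (by simpa using hk), zero_div]

lemma coeff_coeff_changeOfVariables_starSumSeries {a b K : ℕ} (hK : a + 2 * b ≤ K) :
    coeff b (coeff a (changeOfVariables starSumSeries)) =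
      ∑ k ∈ Finset.range K,
        coeff b (coeff a (changeOfVariables (starSeries k))) / k.factorial := by
  simp only [coeff_coeff_changeOfVariables, Finset.sum_div]
  symm
  rw [Finset.sum_comm]
  refine Finset.sum_congr rfl fun l hl ↦ ?_
  rw [Finset.sum_comm]
  refine Finset.sum_congr rfl fun j hj ↦ ?_
  rw [Finset.mem_range] at hl hj
  rw [starSumSeries, coeff_mk, coeff_mk, sum_range_starCoeff (K := K) (by lia), Finset.sum_mul]
  refine Finset.sum_congr rfl fun k _ ↦ ?_
  rw [starCoeff]
  ring

lemma starSumSeries_eq_hurwitzSeries : starSumSeries = hurwitzSeries := by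
  refine changeOfVariables_injective ?_
  ext a b
  obtain ⟨K, hK, hdeg⟩ : ∃ K, a + 2 * b ≤ K ∧ (starPoly a b).natDegree < K :=
    ⟨a + 2 * b + (starPoly a b).natDegree + 1, by lia, by lia⟩
  rw [← eval_one_starPoly, Polynomial.eval_eq_sum_range' hdeg,
    coeff_coeff_changeOfVariables_starSumSeries hK]
  refine Finset.sum_congr rfl fun k _ ↦ ?_
  rw [coeff_coeff_changeOfVariables_starSeries, one_pow, mul_one,
    mul_div_cancel_left₀ _ (by positivity)]

theorem sum_starCoeff_div_factorial (l E : ℕ) :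
    ∑ k ∈ Finset.range (l + 2 * E), starCoeff l E k / k.factorial = hurwitzCoeff l E := by
  rw [← coeff_coeff_hurwitzSeries, ← starSumSeries_eq_hurwitzSeries, starSumSeries, coeff_mk,
    coeff_mk]

end SumStarCoeff

/-! ### Cycle partitions and the Riemann–Hurwitz inequality -/

section Partitions

variable {α : Type*}

/-- The partition whose blocks are `A` and the singletons outside `A`; `block {x, y}` is the finest
partition relating `x` and `y`. -/
def block (A : Set α) : Setoid α where
  r u v := u = v ∨ u ∈ A ∧ v ∈ A
  iseqv := ⟨fun _ ↦ Or.inl rfl, by grind, by grind⟩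

lemma block_apply {A : Set α} {u v : α} : block A u v ↔ u = v ∨ u ∈ A ∧ v ∈ A := Iff.rfl

lemma block_le_iff {A : Set α} {P : Setoid α} : block A ≤ P ↔ ∀ u ∈ A, ∀ v ∈ A, P u v := by
  refine ⟨fun h u hu v hv ↦ h (Or.inr ⟨hu, hv⟩), ?_⟩
  rintro h u v (rfl | ⟨hu, hv⟩)
  exacts [P.refl' u, h u hu v hv]

lemma block_pair_le_iff {x y : α} {P : Setoid α} : block {x, y} ≤ P ↔ P x y := by
  refine ⟨fun h ↦ block_le_iff.1 h x (by simp) y (by simp), fun h ↦ block_le_iff.2 ?_⟩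
  rintro u (rfl | rfl) v (rfl | rfl)
  exacts [P.refl' _, h, P.symm' h, P.refl' _]

lemma sup_block_apply {P : Setoid α} {A : Set α} {u v : α} :
    (P ⊔ block A) u v ↔ P u v ∨ (∃ a ∈ A, P u a) ∧ ∃ b ∈ A, P v b := by
  constructor
  · let Q : Setoid α :=
      { r := fun u v ↦ P u v ∨ (∃ a ∈ A, P u a) ∧ ∃ b ∈ A, P v b
        iseqv :=
          { refl := fun u ↦ Or.inl (P.refl' u)
            symm := fun h ↦ h.imp P.symm' And.symm
            trans := by
              rintro u v w (h | ⟨hu, b, hb, hv⟩) (h' | ⟨⟨c, hc, hv'⟩, hw⟩)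
              · exact Or.inl (P.trans' h h')
              · exact Or.inr ⟨⟨c, hc, P.trans' h hv'⟩, hw⟩
              · exact Or.inr ⟨hu, b, hb, P.trans' (P.symm' h') hv⟩
              · exact Or.inr ⟨hu, hw⟩ } }
    have hle : P ⊔ block A ≤ Q := sup_le (fun _ _ h ↦ Or.inl h) <| block_le_iff.2
      fun u hu v hv ↦ Or.inr ⟨⟨u, hu, P.refl' u⟩, v, hv, P.refl' v⟩
    exact fun h ↦ hle h
  · have hP : P ≤ P ⊔ block A := le_sup_left
    rintro (h | ⟨⟨a, ha, hu⟩, b, hb, hv⟩)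
    · exact hP h
    · have hab : (P ⊔ block A) a b := block_le_iff.1 le_sup_right a ha b hb
      exact Setoid.trans' _ (hP hu) (Setoid.trans' _ hab (Setoid.symm' _ (hP hv)))

lemma block_sup_block_apply {B C : Set α} (hBC : Disjoint B C) {u v : α} :
    (block B ⊔ block C) u v ↔ u = v ∨ u ∈ B ∧ v ∈ B ∨ u ∈ C ∧ v ∈ C := by
  have hC (w : α) : (∃ a ∈ C, block B w a) ↔ w ∈ C := by
    refine ⟨?_, fun hw ↦ ⟨w, hw, Setoid.refl' _ w⟩⟩
    rintro ⟨a, ha, rfl | hB⟩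
    exacts [ha, (Set.disjoint_left.1 hBC hB.2 ha).elim]
  rw [sup_block_apply, hC, hC, block_apply, or_assoc]

lemma sup_inf_block_eq {B C : Set α} (hBC : Disjoint B C) {P Q : Setoid α} (hP : P ≤ block B)
    (hQ : Q ≤ block C) : (P ⊔ Q) ⊓ block B = P := by
  refine le_antisymm ?_ (le_inf le_sup_left hP)
  rintro u v ⟨huv, rfl | ⟨hu, -⟩⟩
  · exact P.refl' u
  have hle : P ⊔ Q ≤ P ⊔ block Bᶜ := sup_le_sup le_rfl <| hQ.trans <| block_le_iff.2
    fun u hu v hv ↦ Or.inr ⟨Set.disjoint_right.1 hBC hu, Set.disjoint_right.1 hBC hv⟩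
  rcases sup_block_apply.1 (hle huv) with h | ⟨⟨a, ha, hua⟩, -⟩
  · exact h
  · rcases hP hua with rfl | h
    exacts [(ha hu).elim, (ha h.2).elim]

/-- The number of blocks of a partition. -/
noncomputable def numBlocks (P : Setoid α) : ℕ := Nat.card (Quotient P)

lemma numBlocks_bot : numBlocks (⊥ : Setoid α) = Nat.card α :=
  (Nat.card_eq_of_bijective (Quotient.mk ⊥) ⟨fun _ _ h ↦ Quotient.exact h,
    Quotient.mk_surjective⟩).symm

section Finite

variable [Finite α]

lemma numBlocks_anti {P Q : Setoid α} (h : P ≤ Q) : numBlocks Q ≤ numBlocks P :=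
  Nat.card_le_card_of_surjective (Quotient.map' id h) <|
    Quotient.ind fun a ↦ ⟨Quotient.mk P a, rfl⟩

lemma numBlocks_sup_block_pair_lt {P : Setoid α} {x y : α} (h : ¬ P x y) :
    numBlocks (P ⊔ block {x, y}) < numBlocks P := by
  let f : Quotient P → Quotient (P ⊔ block {x, y}) :=
    Quotient.map' id (le_sup_left : P ≤ P ⊔ block {x, y})
  have hsurj : Function.Surjective f := Quotient.ind fun a ↦ ⟨Quotient.mk P a, rfl⟩
  refine lt_of_le_of_ne (Nat.card_le_card_of_surjective f hsurj) fun hcard ↦ h ?_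
  have hinj : Function.Injective f := (hsurj.bijective_of_nat_card_le hcard.ge).injective
  have hf : f (Quotient.mk P x) = f (Quotient.mk P y) :=
    Quotient.sound (block_pair_le_iff.1 (le_sup_right : _ ≤ P ⊔ block {x, y}))
  exact Quotient.exact (hinj hf)

lemma numBlocks_le_sup_block_pair (P : Setoid α) (x y : α) :
    numBlocks P ≤ numBlocks (P ⊔ block {x, y}) + 1 := by
  classical
  let g : Quotient P → Quotient (P ⊔ block {x, y}) :=
    Quotient.map' id (le_sup_left : P ≤ P ⊔ block {x, y})
  let f : Quotient P → Option (Quotient (P ⊔ block {x, y})) := fun q ↦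
    if q = Quotient.mk P y then none else some (g q)
  have hf : Function.Injective f := by
    refine Quotient.ind fun a ↦ Quotient.ind fun b ↦ fun hab ↦ ?_
    have hy {u w : α} (hu : Quotient.mk P u ≠ Quotient.mk P y) (hw : w ∈ ({x, y} : Set α))
        (huw : P u w) : P u x := by
      rcases hw with rfl | rfl
      exacts [huw, (hu (Quotient.sound huw)).elim]
    simp only [f] at hab
    split_ifs at hab with ha hb hb
    · rw [ha, hb]
    · rcases sup_block_apply.1 (Quotient.exact (Option.some.inj hab)) with
        h | ⟨⟨c, hc, hac⟩, d, hd, hbd⟩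
      · exact Quotient.sound h
      · exact Quotient.sound (P.trans' (hy ha hc hac) (P.symm' (hy hb hd hbd)))
  simpa only [Finite.card_option, numBlocks] using Nat.card_le_card_of_injective f hf

lemma numBlocks_block_add_card_le {A : Finset α} (hA : A.Nonempty) :
    numBlocks (block (A : Set α)) + A.card ≤ Nat.card α + 1 := by
  classical
  have := Fintype.ofFinite α
  obtain ⟨x, hx⟩ := hA
  let f : (insert x Aᶜ : Finset α) → Quotient (block (A : Set α)) := fun u ↦ Quotient.mk _ u.1
  have hf : Function.Surjective f := Quotient.ind fun u ↦ by
    by_cases hu : u ∈ A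
    · exact ⟨⟨x, by simp⟩, Quotient.sound (Or.inr ⟨hx, hu⟩)⟩
    · exact ⟨⟨u, by simp [hu]⟩, rfl⟩
  have hcard := Nat.card_le_card_of_surjective f hf
  rw [Nat.card_eq_finsetCard, Finset.card_insert_of_notMem (by simpa using hx)] at hcard
  rw [numBlocks, Nat.card_eq_fintype_card (α := α), ← Finset.card_compl_add_card A]
  lia

end Finite

lemma sameCycle_setoid_le_iff {σ : Perm α} {P : Setoid α} :
    Perm.SameCycle.setoid σ ≤ P ↔ ∀ u, P u (σ u) := by
  refine ⟨fun h u ↦ h ⟨1, by simp⟩, fun h u v ↦ ?_⟩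
  rintro ⟨i, rfl⟩
  induction i with
  | zero => exact P.refl' u
  | succ i ih =>
    rw [add_comm, zpow_one_add, Perm.mul_apply]
    exact P.trans' ih (h _)
  | pred i ih =>
    have hstep : σ ((σ ^ (-(i : ℤ) - 1)) u) = (σ ^ (-(i : ℤ))) u := by
      rw [← Perm.mul_apply, ← zpow_one_add, add_sub_cancel]
    exact P.trans' ih (P.symm' (hstep ▸ h _))

lemma sameCycle_setoid_mul_le (σ τ : Perm α) :
    Perm.SameCycle.setoid (σ * τ) ≤ Perm.SameCycle.setoid σ ⊔ Perm.SameCycle.setoid τ :=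
  sameCycle_setoid_le_iff.2 fun u ↦ Setoid.trans' _
    (sameCycle_setoid_le_iff.1 le_sup_right u) (sameCycle_setoid_le_iff.1 le_sup_left (τ u))

lemma sameCycle_setoid_one : Perm.SameCycle.setoid (1 : Perm α) = ⊥ :=
  le_bot_iff.1 <| sameCycle_setoid_le_iff.2 fun u ↦ Setoid.refl' ⊥ u

lemma sameCycle_setoid_inv (σ : Perm α) :
    Perm.SameCycle.setoid σ⁻¹ = Perm.SameCycle.setoid σ :=
  Setoid.ext fun _ _ ↦ Perm.sameCycle_inv

/-- The Riemann–Hurwitz constraint on a product `σ` of `m` transpositions which generate the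
partition `P`. Each block of `P` carries a connected covering of some genus, and
`card α + #(cycles of σ) - m` is the sum of `2 - 2 * genus` over the blocks. -/
def GenusNonneg (m : ℕ) (σ : Perm α) (P : Setoid α) : Prop :=
  Perm.SameCycle.setoid σ ≤ P ∧
    Nat.card α + numBlocks (Perm.SameCycle.setoid σ) ≤ m + 2 * numBlocks P

lemma genusNonneg_zero : GenusNonneg 0 (1 : Perm α) ⊥ := by
  rw [GenusNonneg, sameCycle_setoid_one, numBlocks_bot]
  exact ⟨le_rfl, by lia⟩

variable [DecidableEq α]

lemma sameCycle_setoid_swap (x y : α) : Perm.SameCycle.setoid (swap x y) = block {x, y} := by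
  refine le_antisymm (sameCycle_setoid_le_iff.2 fun u ↦ ?_) (block_pair_le_iff.2 ⟨1, by simp⟩)
  by_cases hu : swap x y u = u
  · exact Or.inl hu.symm
  · have hmem : u ∈ ({x, y} : Set α) := by
      simpa using (swap_apply_ne_self_iff.1 hu).2
    exact Or.inr ⟨hmem, by rcases hmem with rfl | rfl <;> simp⟩

lemma sameCycle_setoid_le_swap_mul (σ : Perm α) (x y : α) :
    Perm.SameCycle.setoid σ ≤ Perm.SameCycle.setoid (swap x y * σ) ⊔ block {x, y} := by
  have h := sameCycle_setoid_mul_le (swap x y) (swap x y * σ)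
  rwa [swap_mul_self_mul, sameCycle_setoid_swap, sup_comm] at h

lemma sameCycle_setoid_sup_le_swap_mul [Finite α] {σ : Perm α} {x y : α} (h : ¬ σ.SameCycle x y) :
    Perm.SameCycle.setoid σ ⊔ block {x, y} ≤ Perm.SameCycle.setoid (swap x y * σ) := by
  set τ := swap x y * σ with hτ
  have reach (n : ℕ) : τ.SameCycle y ((σ ^ n) y) := by
    induction n with
    | zero => exact .refl τ y
    | succ n ih =>
      have hx : σ ((σ ^ n) y) ≠ x := fun hx ↦ h (Perm.SameCycle.symm ⟨n + 1, by
        rw [← hx, ← Perm.mul_apply, ← pow_succ']; norm_cast⟩)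
      rw [pow_succ', Perm.mul_apply]
      by_cases hy : σ ((σ ^ n) y) = y
      · rw [hy]
      · have hstep : τ ((σ ^ n) y) = σ ((σ ^ n) y) := swap_apply_of_ne_of_ne hx hy
        exact hstep ▸ Perm.sameCycle_apply_right.2 ih
  have hxy : τ.SameCycle x y := by
    obtain ⟨n, hn⟩ := (Perm.sameCycle_symm_apply_right.2 (.refl σ y)).exists_nat_pow_eq
    have hlast : τ ((σ ^ n) y) = x := by simp [hτ, hn]
    exact (hlast ▸ Perm.sameCycle_apply_right.2 (reach n)).symm
  exact sup_le ((sameCycle_setoid_le_swap_mul σ x y).trans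
    (sup_le le_rfl (block_pair_le_iff.2 hxy))) (block_pair_le_iff.2 hxy)

variable [Finite α]

lemma numBlocks_sameCycle_swap_mul_le (σ : Perm α) (x y : α) :
    numBlocks (Perm.SameCycle.setoid (swap x y * σ)) ≤
      numBlocks (Perm.SameCycle.setoid σ) + 1 :=
  (numBlocks_le_sup_block_pair _ x y).trans <|
    Nat.add_le_add_right (numBlocks_anti (sameCycle_setoid_le_swap_mul σ x y)) 1

lemma numBlocks_sameCycle_le_formPerm_mul (σ : Perm α) (x : α) (L : List α) :
    numBlocks (Perm.SameCycle.setoid σ) ≤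
      numBlocks (Perm.SameCycle.setoid ((x :: L).formPerm * σ)) + L.length := by
  induction L generalizing x with
  | nil => simp
  | cons y L ih =>
    have h := numBlocks_sameCycle_swap_mul_le (swap x y * ((y :: L).formPerm * σ)) x y
    rw [swap_mul_self_mul] at h
    rw [List.formPerm_cons_cons, mul_assoc, List.length_cons]
    have := ih y
    lia

lemma GenusNonneg.swap_mul {m : ℕ} {σ : Perm α} {P : Setoid α} (h : GenusNonneg m σ P) (x y : α) :
    GenusNonneg (m + 1) (swap x y * σ) (block {x, y} ⊔ P) := by
  obtain ⟨hσP, hm⟩ := h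
  refine ⟨(sameCycle_setoid_mul_le _ _).trans ?_, ?_⟩
  · rw [sameCycle_setoid_swap]
    exact sup_le_sup le_rfl hσP
  rw [sup_comm]
  by_cases hxy : P x y
  · rw [sup_eq_left.2 (block_pair_le_iff.2 hxy)]
    have := numBlocks_sameCycle_swap_mul_le σ x y
    lia
  · have hσ : ¬ σ.SameCycle x y := fun h ↦ hxy (hσP h)
    have hsplit := numBlocks_anti (sameCycle_setoid_sup_le_swap_mul hσ)
    have hcycles := numBlocks_sup_block_pair_lt (P := Perm.SameCycle.setoid σ) hσ
    have hblocks := numBlocks_le_sup_block_pair P x y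
    lia

end Partitions

/-! ### The algebra of permutations with generated partitions -/

/-- A permutation together with a partition recording which points a word multiplying up to that
permutation has connected. -/
@[ext]
structure TrackedPerm (α : Type*) where
  perm : Perm α
  partition : Setoid α

namespace TrackedPerm

variable {α : Type*}

instance : Monoid (TrackedPerm α) where
  mul s t := ⟨s.perm * t.perm, s.partition ⊔ t.partition⟩
  one := ⟨1, ⊥⟩
  mul_assoc s t u := TrackedPerm.ext (mul_assoc s.perm t.perm u.perm)
    (sup_assoc s.partition t.partition u.partition)
  one_mul s := TrackedPerm.ext (one_mul s.perm) (bot_sup_eq s.partition)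
  mul_one s := TrackedPerm.ext (mul_one s.perm) (sup_bot_eq s.partition)

@[simp] lemma partition_one : (1 : TrackedPerm α).partition = ⊥ := rfl

@[simp] lemma perm_mul (s t : TrackedPerm α) : (s * t).perm = s.perm * t.perm := rfl

@[simp] lemma partition_mul (s t : TrackedPerm α) :
    (s * t).partition = s.partition ⊔ t.partition := rfl

/-- A permutation tracked by its own cycles. -/
def ofPerm (τ : Perm α) : TrackedPerm α := ⟨τ, Perm.SameCycle.setoid τ⟩

@[simp] lemma perm_ofPerm (τ : Perm α) : (ofPerm τ).perm = τ := rfl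

@[simp] lemma partition_ofPerm (τ : Perm α) :
    (ofPerm τ).partition = Perm.SameCycle.setoid τ := rfl

lemma ofPerm_mul_ofPerm (σ τ : Perm α) :
    ofPerm σ * ofPerm τ = ofPerm τ * ofPerm (τ⁻¹ * σ * τ) := by
  have hconj (σ τ : Perm α) : Perm.SameCycle.setoid (τ⁻¹ * σ * τ) ≤
      Perm.SameCycle.setoid σ ⊔ Perm.SameCycle.setoid τ := by
    refine (sameCycle_setoid_mul_le _ _).trans <| sup_le
      ((sameCycle_setoid_mul_le _ _).trans ?_) le_sup_right
    rw [sameCycle_setoid_inv, sup_comm]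
  have hconj' := hconj (τ⁻¹ * σ * τ) τ⁻¹
  rw [sameCycle_setoid_inv, sup_comm, show τ⁻¹⁻¹ * (τ⁻¹ * σ * τ) * τ⁻¹ = σ by group] at hconj'
  ext1
  · simp only [perm_mul, perm_ofPerm]
    group
  · exact le_antisymm (sup_le hconj' le_sup_left) (sup_le le_sup_right (hconj σ τ))

lemma commute_ofPerm {σ τ : Perm α} (h : Commute σ τ) : Commute (ofPerm σ) (ofPerm τ) :=
  TrackedPerm.ext h.eq (sup_comm _ _)

/-- A tracked permutation lives within `B` if everything it connects or moves is in `B`. -/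
def IsWithin (B : Set α) (s : TrackedPerm α) : Prop :=
  Perm.SameCycle.setoid s.perm ≤ s.partition ∧ s.partition ≤ block B

lemma isWithin_one (B : Set α) : IsWithin B 1 := ⟨sameCycle_setoid_one.le, bot_le⟩

lemma IsWithin.ofPerm_mul {B : Set α} {s : TrackedPerm α} (hs : IsWithin B s) {τ : Perm α}
    (hτ : Perm.SameCycle.setoid τ ≤ block B) : IsWithin B (ofPerm τ * s) :=
  ⟨(sameCycle_setoid_mul_le _ _).trans (sup_le_sup le_rfl hs.1), sup_le hτ hs.2⟩

end TrackedPerm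

section FixedPoints

variable {α : Type*} {B C : Set α} {σ τ : Perm α}

lemma apply_eq_self_of_le_block (hσ : Perm.SameCycle.setoid σ ≤ block B) {u : α} (hu : u ∉ B) :
    σ u = u := by
  rcases sameCycle_setoid_le_iff.1 hσ u with h | h
  exacts [h.symm, (hu h.1).elim]

lemma disjoint_of_le_block (hBC : Disjoint B C) (hσ : Perm.SameCycle.setoid σ ≤ block B)
    (hτ : Perm.SameCycle.setoid τ ≤ block C) : Perm.Disjoint σ τ := fun u ↦ by
  by_cases hu : u ∈ B
  · exact Or.inr (apply_eq_self_of_le_block hτ (Set.disjoint_left.1 hBC hu))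
  · exact Or.inl (apply_eq_self_of_le_block hσ hu)

lemma le_block_sup_block_iff [DecidableEq α] (hBC : Disjoint B C) (hτ : τ.IsSwap) :
    Perm.SameCycle.setoid τ ≤ block B ⊔ block C ↔
      Perm.SameCycle.setoid τ ≤ block B ∨ Perm.SameCycle.setoid τ ≤ block C := by
  obtain ⟨x, y, hxy, rfl⟩ := hτ
  simp [sameCycle_setoid_swap, block_pair_le_iff, block_sup_block_apply hBC, block_apply, hxy]

lemma not_le_block_of_le_block [DecidableEq α] (hBC : Disjoint B C) (hτ : τ.IsSwap)
    (hB : Perm.SameCycle.setoid τ ≤ block B) : ¬ Perm.SameCycle.setoid τ ≤ block C := by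
  intro hC
  obtain rfl := Perm.disjoint_refl_iff.1 (disjoint_of_le_block hBC hB hC)
  obtain ⟨x, y, hxy, h⟩ := hτ
  exact hxy (swap_eq_one_iff.1 h.symm)

lemma TrackedPerm.eq_and_eq_of_mul_eq_mul (hBC : Disjoint B C) {s s' t t' : TrackedPerm α}
    (hs : s.IsWithin B) (hs' : s'.IsWithin B) (ht : t.IsWithin C) (ht' : t'.IsWithin C)
    (h : s * t = s' * t') : s = s' ∧ t = t' := by
  have hpartition : s.partition ⊔ t.partition = s'.partition ⊔ t'.partition :=
    congrArg partition h
  have hperm : s.perm * t.perm = s'.perm * t'.perm := congrArg perm h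
  have hsp : s.partition = s'.partition := by
    rw [← sup_inf_block_eq hBC hs.2 ht.2, hpartition, sup_inf_block_eq hBC hs'.2 ht'.2]
  have htp : t.partition = t'.partition := by
    rw [← sup_inf_block_eq hBC.symm ht.2 hs.2, sup_comm, hpartition, sup_comm,
      sup_inf_block_eq hBC.symm ht'.2 hs'.2]
  have hsσ : s.perm = s'.perm := by
    ext u
    by_cases hu : u ∈ B
    · have huC : u ∉ C := Set.disjoint_left.1 hBC hu
      simpa [apply_eq_self_of_le_block (ht.1.trans ht.2) huC,
        apply_eq_self_of_le_block (ht'.1.trans ht'.2) huC] using congrArg (· u) hperm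
    · rw [apply_eq_self_of_le_block (hs.1.trans hs.2) hu,
        apply_eq_self_of_le_block (hs'.1.trans hs'.2) hu]
  exact ⟨TrackedPerm.ext hsσ hsp, TrackedPerm.ext (mul_left_cancel (hsσ ▸ hperm)) htp⟩

end FixedPoints

section WordSum

/-- The formal sum of the tracked permutations of `T`: its `m`-th power enumerates the words of
length `m` in `T` by their product and the partition they generate. -/
noncomputable def wordSum {α : Type*} (T : Finset (Perm α)) : MonoidAlgebra ℚ (TrackedPerm α) :=
  ∑ τ ∈ T, MonoidAlgebra.single (TrackedPerm.ofPerm τ) 1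

variable {α : Type*} {T T' : Finset (Perm α)}

lemma coeff_wordSum_mul (f : MonoidAlgebra ℚ (TrackedPerm α))
    (s : TrackedPerm α) : (wordSum T * f).coeff s =
      ∑ τ ∈ T, (MonoidAlgebra.single (TrackedPerm.ofPerm τ) 1 * f).coeff s := by
  rw [wordSum, Finset.sum_mul, MonoidAlgebra.coeff_sum, Finsupp.finsetSum_apply]

lemma exists_coeff_ne_zero_of_coeff_wordSum_mul {f : MonoidAlgebra ℚ (TrackedPerm α)}
    {s : TrackedPerm α} (h : (wordSum T * f).coeff s ≠ 0) :
    ∃ τ ∈ T, ∃ t, f.coeff t ≠ 0 ∧ TrackedPerm.ofPerm τ * t = s := by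
  classical
  rw [coeff_wordSum_mul] at h
  obtain ⟨τ, hτ, hne⟩ := Finset.exists_ne_zero_of_sum_ne_zero h
  have hs := MonoidAlgebra.support_coeff_single_mul_subset f 1 (TrackedPerm.ofPerm τ)
    (Finsupp.mem_support_iff.2 hne)
  obtain ⟨t, ht, rfl⟩ := Finset.mem_image.1 hs
  exact ⟨τ, hτ, t, Finsupp.mem_support_iff.1 ht, rfl⟩

/-- Words are built one letter at a time, so an invariant preserved by each letter holds on the
support of any product of powers of word sums. -/
lemma of_coeff_wordSum_pow_mul_pow_ne_zero (S : ℕ → TrackedPerm α → Prop) (hone : S 0 1)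
    (hmul : ∀ τ, τ ∈ T ∨ τ ∈ T' → ∀ m s, S m s → S (m + 1) (TrackedPerm.ofPerm τ * s))
    {k m : ℕ} {s : TrackedPerm α} (h : (wordSum T ^ k * wordSum T' ^ m).coeff s ≠ 0) :
    S (k + m) s := by
  induction k generalizing s with
  | zero =>
    rw [pow_zero, one_mul] at h
    rw [zero_add]
    induction m generalizing s with
    | zero =>
      rw [pow_zero, MonoidAlgebra.one_def, MonoidAlgebra.coeff_single,
        Finsupp.single_apply_ne_zero] at h
      exact h.1 ▸ hone
    | succ m ih =>
      rw [pow_succ'] at h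
      obtain ⟨τ, hτ, t, ht, rfl⟩ := exists_coeff_ne_zero_of_coeff_wordSum_mul h
      exact hmul τ (Or.inr hτ) m t (ih ht)
  | succ k ih =>
    rw [pow_succ', mul_assoc] at h
    obtain ⟨τ, hτ, t, ht, rfl⟩ := exists_coeff_ne_zero_of_coeff_wordSum_mul h
    rw [add_right_comm]
    exact hmul τ (Or.inl hτ) (k + m) t (ih ht)

lemma isWithin_of_coeff_ne_zero {B : Set α}
    (hT : ∀ τ, τ ∈ T ∨ τ ∈ T' → Perm.SameCycle.setoid τ ≤ block B) {k m : ℕ} {s : TrackedPerm α}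
    (h : (wordSum T ^ k * wordSum T' ^ m).coeff s ≠ 0) : s.IsWithin B :=
  of_coeff_wordSum_pow_mul_pow_ne_zero (fun _ s ↦ s.IsWithin B) (TrackedPerm.isWithin_one B)
    (fun τ hτ _ _ hs ↦ hs.ofPerm_mul (hT τ hτ)) h

lemma genusNonneg_of_coeff_ne_zero [Finite α] [DecidableEq α]
    (hT : ∀ τ, τ ∈ T ∨ τ ∈ T' → τ.IsSwap) {k m : ℕ} {σ : Perm α} {P : Setoid α}
    (h : (wordSum T ^ k * wordSum T' ^ m).coeff ⟨σ, P⟩ ≠ 0) : GenusNonneg (k + m) σ P := by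
  refine of_coeff_wordSum_pow_mul_pow_ne_zero (fun m s ↦ GenusNonneg m s.perm s.partition)
    genusNonneg_zero (fun τ hτ m s hs ↦ ?_) h
  obtain ⟨x, y, -, rfl⟩ := hT τ hτ
  simpa [sameCycle_setoid_swap] using hs.swap_mul x y

lemma coeff_mul_of_isWithin {B C : Set α} (hBC : Disjoint B C)
    {f g : MonoidAlgebra ℚ (TrackedPerm α)}
    (hf : ∀ s, f.coeff s ≠ 0 → s.IsWithin B) (hg : ∀ t, g.coeff t ≠ 0 → t.IsWithin C)
    {s t : TrackedPerm α} (hs : s.IsWithin B) (ht : t.IsWithin C) :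
    (f * g).coeff (s * t) = f.coeff s * g.coeff t :=
  MonoidAlgebra.coeff_mul_mul_of_uniqueMul fun _ _ hs' ht' h ↦
    TrackedPerm.eq_and_eq_of_mul_eq_mul hBC (hf _ (Finsupp.mem_support_iff.1 hs')) hs
      (hg _ (Finsupp.mem_support_iff.1 ht')) ht h

lemma coeff_mul_natCast (f : MonoidAlgebra ℚ (TrackedPerm α)) (n : ℕ) (s : TrackedPerm α) :
    (f * (n : MonoidAlgebra ℚ (TrackedPerm α))).coeff s = n * f.coeff s := by
  rw [← (Nat.cast_commute _ _).eq, ← nsmul_eq_mul, ← Nat.cast_smul_eq_nsmul ℚ,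
    MonoidAlgebra.coeff_smul_apply, smul_eq_mul]

lemma commute_wordSum (h : ∀ τ ∈ T, ∀ τ' ∈ T', Commute τ τ') :
    Commute (wordSum T) (wordSum T') :=
  Commute.sum_left _ _ _ fun τ hτ ↦ Commute.sum_right _ _ _ fun τ' hτ' ↦ by
    rw [Commute, SemiconjBy, MonoidAlgebra.single_mul_single, MonoidAlgebra.single_mul_single,
      (TrackedPerm.commute_ofPerm (h τ hτ τ' hτ')).eq]

open scoped Classical in
/-- The algebra endomorphism which forgets the words connecting more than `P` does. -/
noncomputable def restrictHom (P : Setoid α) :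
    MonoidAlgebra ℚ (TrackedPerm α) →ₐ[ℚ] MonoidAlgebra ℚ (TrackedPerm α) :=
  MonoidAlgebra.lift ℚ _ _
    { toFun := fun s ↦ if s.partition ≤ P then MonoidAlgebra.single s 1 else 0
      map_one' := by simp [MonoidAlgebra.one_def]
      map_mul' := fun s t ↦ by
        by_cases hs : s.partition ≤ P <;> by_cases ht : t.partition ≤ P <;>
          simp [hs, ht, MonoidAlgebra.single_mul_single] }

open scoped Classical in
lemma restrictHom_single (P : Setoid α) (s : TrackedPerm α) (r : ℚ) :
    restrictHom P (MonoidAlgebra.single s r) =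
      if s.partition ≤ P then MonoidAlgebra.single s r else 0 := by
  simp [restrictHom, MonoidAlgebra.lift_single]

lemma coeff_restrictHom {P : Setoid α} (f : MonoidAlgebra ℚ (TrackedPerm α)) {s : TrackedPerm α}
    (hs : s.partition ≤ P) : (restrictHom P f).coeff s = f.coeff s := by
  induction f using MonoidAlgebra.induction_linear with
  | zero => simp
  | add f g hf hg => simp [hf, hg]
  | single t r =>
    rw [restrictHom_single]
    split_ifs with ht
    · rfl
    · have hst : t ≠ s := by
        rintro rfl
        exact ht hs
      simp [hst]

open scoped Classical in
lemma restrictHom_wordSum (P : Setoid α) (T : Finset (Perm α)) :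
    restrictHom P (wordSum T) = wordSum {τ ∈ T | Perm.SameCycle.setoid τ ≤ P} := by
  simp only [wordSum, map_sum, restrictHom_single, TrackedPerm.partition_ofPerm,
    Finset.sum_filter]
  rfl

/-- The partitions of a finite type form a finite type, so that counts can be summed over them. -/
noncomputable instance fintypeSetoid [Finite α] : Fintype (Setoid α) :=
  have : Finite (Setoid α) := Finite.of_injective (fun P : Setoid α ↦ (P : α → α → Prop))
    fun _ _ h ↦ Setoid.ext fun u v ↦ iff_of_eq (congrFun₂ h u v)
  Fintype.ofFinite _

open scoped Classical in
lemma coeff_single_ofPerm_mul [Finite α] (τ : Perm α) (f : MonoidAlgebra ℚ (TrackedPerm α))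
    (σ : Perm α) (P : Setoid α) :
    (MonoidAlgebra.single (TrackedPerm.ofPerm τ) 1 * f).coeff ⟨σ, P⟩ =
      ∑ Q with Perm.SameCycle.setoid τ ⊔ Q = P, f.coeff ⟨τ⁻¹ * σ, Q⟩ := by
  induction f using MonoidAlgebra.induction_linear with
  | zero => simp
  | add f g hf hg => simp [mul_add, hf, hg, Finset.sum_add_distrib]
  | single t r =>
    obtain ⟨ρ, R⟩ := t
    have hmul : TrackedPerm.ofPerm τ * ⟨ρ, R⟩ = ⟨σ, P⟩ ↔
        Perm.SameCycle.setoid τ ⊔ R = P ∧ ρ = τ⁻¹ * σ := by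
      rw [TrackedPerm.ext_iff, and_comm, eq_inv_mul_iff_mul_eq]
      rfl
    simp only [MonoidAlgebra.single_mul_single, one_mul, MonoidAlgebra.coeff_single,
      Finsupp.single_apply, hmul, TrackedPerm.mk.injEq, Finset.sum_filter]
    rw [Finset.sum_eq_single R (fun Q _ hQ ↦ by simp [hQ.symm]) (by simp)]
    simp [ite_and]

end WordSum

section Swaps

variable {α : Type*} [Fintype α] [DecidableEq α]

open scoped Classical in
/-- The transpositions of `α`. -/
noncomputable def swaps (α : Type*) [Fintype α] [DecidableEq α] : Finset (Perm α) := {τ | τ.IsSwap}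

open scoped Classical in
/-- The star transpositions at `p`: those moving `p`. -/
noncomputable def starSwaps (p : α) : Finset (Perm α) := {τ | τ.IsSwap ∧ τ p ≠ p}

open scoped Classical in
/-- The transpositions fixing `p`. -/
noncomputable def fixingSwaps (p : α) : Finset (Perm α) := {τ | τ.IsSwap ∧ τ p = p}

@[simp] lemma mem_swaps {τ : Perm α} : τ ∈ swaps α ↔ τ.IsSwap := by simp [swaps]

@[simp] lemma mem_starSwaps {p : α} {τ : Perm α} : τ ∈ starSwaps p ↔ τ.IsSwap ∧ τ p ≠ p := by
  simp [starSwaps]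

@[simp] lemma mem_fixingSwaps {p : α} {τ : Perm α} : τ ∈ fixingSwaps p ↔ τ.IsSwap ∧ τ p = p := by
  simp [fixingSwaps]

lemma wordSum_swaps (p : α) :
    wordSum (swaps α) = wordSum (starSwaps p) + wordSum (fixingSwaps p) := by
  simp only [wordSum, swaps, starSwaps, fixingSwaps, ← Finset.filter_filter]
  rw [add_comm, Finset.sum_filter_add_sum_filter_not]

lemma starSwaps_eq_image (p : α) :
    starSwaps p = (Finset.univ.erase p).image fun a ↦ swap a p := by
  ext τ
  simp only [mem_starSwaps, Finset.mem_image, Finset.mem_erase, Finset.mem_univ, and_true]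
  constructor
  · rintro ⟨⟨x, y, hxy, rfl⟩, hp⟩
    rcases eq_or_ne p x with rfl | hx
    · exact ⟨y, hxy.symm, swap_comm _ _⟩
    · rcases eq_or_ne p y with rfl | hy
      · exact ⟨x, hxy, rfl⟩
      · exact (hp (swap_apply_of_ne_of_ne hx hy)).elim
  · rintro ⟨a, ha, rfl⟩
    exact ⟨⟨a, p, ha, rfl⟩, by simpa using ha⟩

lemma sum_starSwaps {M : Type*} [AddCommMonoid M] (p : α) (F : Perm α → M) :
    ∑ τ ∈ starSwaps p, F τ = ∑ a ∈ Finset.univ.erase p, F (swap a p) := by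
  rw [starSwaps_eq_image, Finset.sum_image]
  intro a _ b _ h
  simpa using congrArg (· p) h

lemma commute_wordSum_starSwaps_fixingSwaps (p : α) :
    Commute (wordSum (starSwaps p)) (wordSum (fixingSwaps p)) := by
  refine Commute.sum_right _ _ _ fun τ hτ ↦ ?_
  have hτp : τ p = p := (mem_fixingSwaps.1 hτ).2
  rw [Commute, SemiconjBy, wordSum, Finset.sum_mul, Finset.mul_sum]
  refine Finset.sum_equiv (MulAut.conj τ⁻¹).toEquiv (fun σ ↦ ?_) fun σ _ ↦ ?_
  · have hfix : (τ⁻¹ * σ * τ⁻¹⁻¹) p = p ↔ σ p = p := by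
      simp only [inv_inv, Perm.mul_apply, hτp, Perm.inv_eq_iff_eq]
    change _ ↔ τ⁻¹ * σ * τ⁻¹⁻¹ ∈ starSwaps p
    simp only [mem_starSwaps, Perm.isSwap_iff_cycleType, Perm.cycleType_conj, ne_eq, hfix]
  · simp [MonoidAlgebra.single_mul_single, TrackedPerm.ofPerm_mul_ofPerm σ τ]

end Swaps

section Counts

variable {α : Type*} [Fintype α] [DecidableEq α] {B C : Set α} {p : α} {σ τ : Perm α}
  {P : Setoid α} {k m : ℕ}

/-- The number of words of `m` transpositions with product `σ` which generate the partition `P`. -/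
noncomputable def wordCount (m : ℕ) (σ : Perm α) (P : Setoid α) : ℚ :=
  (wordSum (swaps α) ^ m).coeff ⟨σ, P⟩

/-- The number of words of `k` star transpositions at `p` followed by `m` transpositions fixing `p`
with product `σ` which generate the partition `P`. -/
noncomputable def starWordCount (p : α) (k m : ℕ) (σ : Perm α) (P : Setoid α) : ℚ :=
  (wordSum (starSwaps p) ^ k * wordSum (fixingSwaps p) ^ m).coeff ⟨σ, P⟩

lemma genusNonneg_of_wordCount_ne_zero (h : wordCount m σ P ≠ 0) : GenusNonneg m σ P := by
  rw [wordCount, ← one_mul (_ ^ m), ← pow_zero (wordSum (swaps α))] at h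
  simpa using genusNonneg_of_coeff_ne_zero (fun τ hτ ↦ by simpa using hτ) h

lemma genusNonneg_of_starWordCount_ne_zero (h : starWordCount p k m σ P ≠ 0) :
    GenusNonneg (k + m) σ P :=
  genusNonneg_of_coeff_ne_zero
    (fun _ hτ ↦ hτ.elim (fun h ↦ (mem_starSwaps.1 h).1) fun h ↦ (mem_fixingSwaps.1 h).1) h

lemma wordCount_eq_sum_starWordCount (p : α) (m : ℕ) (σ : Perm α) (P : Setoid α) :
    wordCount m σ P =
      ∑ k ∈ Finset.range (m + 1), (m.choose k : ℚ) * starWordCount p k (m - k) σ P := by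
  rw [wordCount, wordSum_swaps p, (commute_wordSum_starSwaps_fixingSwaps p).add_pow,
    MonoidAlgebra.coeff_sum, Finsupp.finsetSum_apply]
  exact Finset.sum_congr rfl fun k _ ↦ coeff_mul_natCast _ _ _

open scoped Classical in
lemma starWordCount_succ (p : α) (k m : ℕ) (σ : Perm α) (P : Setoid α) :
    starWordCount p (k + 1) m σ P = ∑ a ∈ Finset.univ.erase p, ∑ Q with block {a, p} ⊔ Q = P,
      starWordCount p k m (swap a p * σ) Q := by
  rw [starWordCount, pow_succ', mul_assoc, coeff_wordSum_mul, sum_starSwaps]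
  simp only [coeff_single_ofPerm_mul, sameCycle_setoid_swap, swap_inv]
  rfl

open scoped Classical in
lemma filter_starSwaps_le_block_sup_block (hBC : Disjoint B C) (hp : p ∉ B) :
    {τ ∈ starSwaps p | Perm.SameCycle.setoid τ ≤ block B ⊔ block C} =
      {τ ∈ starSwaps p | Perm.SameCycle.setoid τ ≤ block C} := by
  refine Finset.filter_congr fun τ hτ ↦ ?_
  obtain ⟨hswap, hτp⟩ := mem_starSwaps.1 hτ
  rw [le_block_sup_block_iff hBC hswap]
  exact or_iff_right fun hB ↦ hτp (apply_eq_self_of_le_block hB hp)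

open scoped Classical in
lemma wordSum_filter_fixingSwaps_le_block_sup_block (hBC : Disjoint B C) (hp : p ∉ B) :
    wordSum {τ ∈ fixingSwaps p | Perm.SameCycle.setoid τ ≤ block B ⊔ block C} =
      wordSum {τ ∈ swaps α | Perm.SameCycle.setoid τ ≤ block B} +
        wordSum {τ ∈ fixingSwaps p | Perm.SameCycle.setoid τ ≤ block C} := by
  simp only [wordSum]
  rw [← Finset.sum_union]
  · congr 1
    ext τ
    simp only [mem_fixingSwaps, mem_swaps, Finset.mem_filter, Finset.mem_union]
    by_cases hswap : τ.IsSwap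
    · have hfix (hB : Perm.SameCycle.setoid τ ≤ block B) : τ p = p :=
        apply_eq_self_of_le_block hB hp
      rw [le_block_sup_block_iff hBC hswap]
      tauto
    · simp [hswap]
  · refine Finset.disjoint_left.2 fun τ hB hC ↦ ?_
    obtain ⟨hswap, hle⟩ := Finset.mem_filter.1 hB
    exact not_le_block_of_le_block hBC (mem_swaps.1 hswap) hle (Finset.mem_filter.1 hC).2

open scoped Classical in
lemma coeff_wordSum_filter_mul_eq_wordCount_mul_starWordCount (hBC : Disjoint B C)
    {σB σC : Perm α} (hB : Perm.SameCycle.setoid σB ≤ block B)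
    (hC : Perm.SameCycle.setoid σC ≤ block C) (p : α) (i k m : ℕ) :
    (wordSum {τ ∈ swaps α | Perm.SameCycle.setoid τ ≤ block B} ^ i *
        (wordSum {τ ∈ starSwaps p | Perm.SameCycle.setoid τ ≤ block C} ^ k *
          wordSum {τ ∈ fixingSwaps p | Perm.SameCycle.setoid τ ≤ block C} ^ m)).coeff
        ⟨σB * σC, block B ⊔ block C⟩ =
      wordCount i σB (block B) * starWordCount p k m σC (block C) := by
  refine (coeff_mul_of_isWithin hBC (s := ⟨σB, block B⟩) (t := ⟨σC, block C⟩) (fun s hs ↦ ?_)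
    (fun t ht ↦ ?_) ⟨hB, le_rfl⟩ ⟨hC, le_rfl⟩).trans ?_
  · rw [← one_mul (_ ^ i), ← pow_zero (wordSum ∅)] at hs
    exact isWithin_of_coeff_ne_zero (by simp) hs
  · exact isWithin_of_coeff_ne_zero (fun τ hτ ↦ hτ.elim (fun h ↦ (Finset.mem_filter.1 h).2)
      fun h ↦ (Finset.mem_filter.1 h).2) ht
  · rw [wordCount, starWordCount, ← coeff_restrictHom (wordSum (swaps α) ^ i) (P := block B) le_rfl,
      ← coeff_restrictHom (wordSum (starSwaps p) ^ k * _) (P := block C) le_rfl]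
    simp only [map_mul, map_pow, restrictHom_wordSum]

open scoped Classical in
/-- A word generating two disjoint blocks is a shuffle of a word in each; since `p` lies in the
second block, the letters in the first one all fix `p`. -/
lemma starWordCount_block_sup_block (hBC : Disjoint B C) (hp : p ∈ C) {σB σC : Perm α}
    (hB : Perm.SameCycle.setoid σB ≤ block B) (hC : Perm.SameCycle.setoid σC ≤ block C)
    (k m : ℕ) :
    starWordCount p k m (σB * σC) (block B ⊔ block C) = ∑ i ∈ Finset.range (m + 1),
      (m.choose i : ℚ) * (wordCount i σB (block B) * starWordCount p k (m - i) σC (block C)) := by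
  have hpB : p ∉ B := Set.disjoint_right.1 hBC hp
  have hcomm {T : Finset (Perm α)} :
      Commute (wordSum {τ ∈ swaps α | Perm.SameCycle.setoid τ ≤ block B})
        (wordSum {τ ∈ T | Perm.SameCycle.setoid τ ≤ block C}) :=
    commute_wordSum fun τ hτ τ' hτ' ↦ (disjoint_of_le_block hBC (Finset.mem_filter.1 hτ).2
      (Finset.mem_filter.1 hτ').2).commute
  rw [starWordCount, ← coeff_restrictHom _ (P := block B ⊔ block C) le_rfl, map_mul, map_pow,
    map_pow, restrictHom_wordSum, restrictHom_wordSum, filter_starSwaps_le_block_sup_block hBC hpB,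
    wordSum_filter_fixingSwaps_le_block_sup_block hBC hpB, hcomm.add_pow, Finset.mul_sum,
    MonoidAlgebra.coeff_sum, Finsupp.finsetSum_apply]
  refine Finset.sum_congr rfl fun i _ ↦ ?_
  rw [← coeff_wordSum_filter_mul_eq_wordCount_mul_starWordCount hBC hB hC, ← mul_assoc,
    coeff_mul_natCast, ← mul_assoc, (hcomm.pow_pow i k).symm.eq, mul_assoc]

end Counts

section ListCycles

variable {α : Type*} [DecidableEq α]

lemma formPerm_append_cons (x a : α) (l₁ l₂ : List α) :
    (x :: (l₁ ++ a :: l₂)).formPerm = (x :: (l₁ ++ [a])).formPerm * (a :: l₂).formPerm := by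
  induction l₁ generalizing x with
  | nil => simp [List.formPerm_cons_cons]
  | cons y l₁ ih =>
    simp only [List.cons_append]
    rw [List.formPerm_cons_cons, ih, List.formPerm_cons_cons, mul_assoc]

lemma formPerm_append_singleton {x a : α} {l : List α} (h : (x :: (l ++ [a])).Nodup) :
    (x :: (l ++ [a])).formPerm = swap a x * (x :: l).formPerm := by
  have hrot : (a :: x :: l) ~r (x :: (l ++ [a])) := ⟨1, by simp⟩
  rw [← List.formPerm_eq_of_isRotated (hrot.nodup_iff.2 h) hrot, List.formPerm_cons_cons]

lemma disjoint_formPerm {l l' : List α} (h : l.Disjoint l') :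
    Perm.Disjoint l.formPerm l'.formPerm := fun u ↦ by
  by_cases hu : u ∈ l
  · exact Or.inr (List.formPerm_apply_of_notMem (h hu))
  · exact Or.inl (List.formPerm_apply_of_notMem hu)

lemma swap_mul_formPerm_append {x a : α} {l₁ l₂ : List α} (h : ((x :: l₁) ++ a :: l₂).Nodup) :
    swap a x * ((x :: l₁) ++ a :: l₂).formPerm = (a :: l₂).formPerm * (x :: l₁).formPerm := by
  have hnodup : (x :: (l₁ ++ [a])).Nodup :=
    h.sublist (.cons_cons _ (.append_left (List.singleton_sublist.2 List.mem_cons_self) _))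
  rw [List.cons_append, formPerm_append_cons, formPerm_append_singleton hnodup, mul_assoc,
    (disjoint_formPerm (List.disjoint_of_nodup_append h)).commute.eq, swap_mul_self_mul]

lemma sameCycle_setoid_formPerm_le_block {l : List α} {B : Set α} (h : ∀ x ∈ l, x ∈ B) :
    Perm.SameCycle.setoid l.formPerm ≤ block B := by
  refine sameCycle_setoid_le_iff.2 fun u ↦ ?_
  by_cases hu : u ∈ l
  · exact Or.inr ⟨h u hu, h _ (List.formPerm_apply_mem_of_mem hu)⟩
  · exact Or.inl (List.formPerm_apply_of_notMem hu).symm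

lemma rel_of_sameCycle_setoid_formPerm_le {x y : α} {l : List α} {P : Setoid α}
    (h : Perm.SameCycle.setoid l.formPerm ≤ P) (hl : l.Nodup) (hx : x ∈ l) (hy : y ∈ l) : P x y :=
  h (hl.isCycleOn_formPerm.2 hx hy)

lemma sameCycle_setoid_le_mul_of_disjoint {α : Type*} {σ τ : Perm α} (h : Perm.Disjoint σ τ) :
    Perm.SameCycle.setoid σ ≤ Perm.SameCycle.setoid (σ * τ) := by
  refine sameCycle_setoid_le_iff.2 fun u ↦ ?_
  rcases h u with hσ | hτ
  · rw [hσ]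
  · have huv := sameCycle_setoid_le_iff.1 (le_refl (Perm.SameCycle.setoid (σ * τ))) u
    rwa [Perm.mul_apply, hτ] at huv

lemma rel_of_sameCycle_setoid_formPerm_mul_formPerm_le {x y : α} {l l' : List α} {P : Setoid α}
    (hl : l.Nodup) (hl' : l'.Nodup) (hdisj : l.Disjoint l') (hx : x ∈ l) (hy : y ∈ l')
    (h : Perm.SameCycle.setoid (l.formPerm * l'.formPerm) ≤ P) :
    (∀ u ∈ l, P u x) ∧ ∀ u ∈ l', P u y := by
  have hd := disjoint_formPerm hdisj
  have hle := (sameCycle_setoid_le_mul_of_disjoint hd).trans h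
  have hle' := (sameCycle_setoid_le_mul_of_disjoint hd.symm).trans (hd.commute.eq ▸ h)
  exact ⟨fun u hu ↦ rel_of_sameCycle_setoid_formPerm_le hle hl hu hx,
    fun u hu ↦ rel_of_sameCycle_setoid_formPerm_le hle' hl' hu hy⟩

lemma two_mul_card_le_of_formPerm_mul_formPerm [Finite α] {A : Finset α} (hA : A.Nonempty)
    {x y : α} {L L' : List α} {m : ℕ}
    (h : GenusNonneg m ((x :: L).formPerm * (y :: L').formPerm) (block ↑A)) :
    2 * A.card ≤ m + L.length + L'.length + 2 := by
  have hL := numBlocks_sameCycle_le_formPerm_mul (y :: L').formPerm x L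
  have hL' := numBlocks_sameCycle_le_formPerm_mul 1 y L'
  rw [mul_one, sameCycle_setoid_one, numBlocks_bot] at hL'
  have hblock := numBlocks_block_add_card_le hA
  have hgenus := h.2
  lia

lemma two_mul_card_le_of_formPerm [Finite α] {A : Finset α} (hA : A.Nonempty) {x : α} {L : List α}
    {m : ℕ} (h : GenusNonneg m (x :: L).formPerm (block ↑A)) :
    2 * A.card ≤ m + L.length + 2 :=
  two_mul_card_le_of_formPerm_mul_formPerm hA (y := x) (L' := []) (by simpa using h)

end ListCycles

section BlockDecompositions

variable {α : Type*}

lemma block_sup_block_apply_of_mem {B C : Set α} (hBC : Disjoint B C) {a u : α} (ha : a ∈ B) :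
    (block B ⊔ block C) u a ↔ u ∈ B := by
  have haC : a ∉ C := Set.disjoint_left.1 hBC ha
  rw [block_sup_block_apply hBC]
  grind

lemma block_pair_sup_block_sup_block {B C : Set α} (hBC : Disjoint B C) {a p : α} (ha : a ∈ B)
    (hp : p ∈ C) : block {a, p} ⊔ (block B ⊔ block C) = block (B ∪ C) := by
  ext u v
  have hd : ∀ w ∈ B, w ∉ C := fun _ hw ↦ Set.disjoint_left.1 hBC hw
  rw [sup_comm, sup_block_apply]
  simp only [Set.mem_insert_iff, Set.mem_singleton_iff, exists_eq_or_imp, exists_eq_left,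
    block_sup_block_apply hBC, block_apply, Set.mem_union]
  grind

lemma eq_block_sup_block_of_block_pair_sup_eq {A : Set α} {a p : α} (ha : a ∈ A) {Q : Setoid α}
    (hQ : block {a, p} ⊔ Q = block A) :
    Q = block {u ∈ A | Q u a} ⊔ block {u ∈ A | ¬ Q u a} := by
  have hd : Disjoint {u ∈ A | Q u a} {u ∈ A | ¬ Q u a} :=
    Set.disjoint_left.2 fun _ h h' ↦ h'.2 h.2
  have hle : Q ≤ block A := hQ ▸ le_sup_right
  have hcover (u : α) (hu : u ∈ A) : Q u a ∨ Q u p := by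
    have h : (Q ⊔ block {a, p}) u a := by
      rw [sup_comm, hQ]
      exact Or.inr ⟨hu, ha⟩
    rw [sup_block_apply] at h
    simpa using h.imp_right And.left
  ext u v
  rw [block_sup_block_apply hd]
  constructor
  · intro huv
    refine (hle huv).imp_right fun h ↦ ?_
    have hiff : Q u a ↔ Q v a := ⟨Q.trans' (Q.symm' huv), Q.trans' huv⟩
    grind
  · rintro (rfl | ⟨hu, hv⟩ | ⟨hu, hv⟩)
    · exact Q.refl' u
    · exact Q.trans' hu.2 (Q.symm' hv.2)
    · exact Q.trans' ((hcover u hu.1).resolve_left hu.2)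
        (Q.symm' ((hcover v hv.1).resolve_left hv.2))

open scoped Classical in
lemma sum_block_pair_sup_eq [Finite α] [DecidableEq α] {A : Finset α} {a p : α}
    (ha : a ∈ A) (hp : p ∈ A) (f : Setoid α → ℚ) :
    ∑ Q with block {a, p} ⊔ Q = block ↑A, f Q =
      f (block ↑A) + ∑ B ∈ A.powerset with a ∈ B ∧ p ∉ B, f (block ↑B ⊔ block ↑(A \ B)) := by
  have hmem : block ↑A ∈ ({Q | block {a, p} ⊔ Q = block ↑A} : Finset (Setoid α)) := by
    exact Finset.mem_filter.2 ⟨Finset.mem_univ _, sup_eq_right.2 <|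
      block_pair_le_iff.2 (Or.inr ⟨ha, hp⟩)⟩
  have hdisj (B : Finset α) : Disjoint (B : Set α) ↑(A \ B) :=
    Finset.disjoint_coe.2 Finset.disjoint_sdiff
  have hsplit (Q : Setoid α) (hQ : block {a, p} ⊔ Q = block ↑A) :
      block ↑({u ∈ A | Q u a} : Finset α) ⊔ block ↑(A \ ({u ∈ A | Q u a} : Finset α)) = Q := by
    rw [← Finset.filter_not, Finset.coe_filter, Finset.coe_filter]
    exact (eq_block_sup_block_of_block_pair_sup_eq ha hQ).symm
  rw [← Finset.add_sum_erase _ _ hmem]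
  congr 1
  refine Finset.sum_bij' (fun Q _ ↦ {u ∈ A | Q u a}) (fun B _ ↦ block ↑B ⊔ block ↑(A \ B))
    (fun Q hQ ↦ ?_) (fun B hB ↦ ?_) (fun Q hQ ↦ ?_) (fun B hB ↦ ?_) fun Q hQ ↦ ?_
  · simp only [Finset.mem_erase, Finset.mem_filter, Finset.mem_univ, true_and] at hQ
    have hpa : ¬ Q p a := fun h ↦
      hQ.1 (hQ.2 ▸ (sup_eq_right.2 (block_pair_le_iff.2 (Q.symm' h))).symm)
    simp [ha, hpa]
  · simp only [Finset.mem_filter, Finset.mem_powerset] at hB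
    obtain ⟨hBA, haB, hpB⟩ := hB
    refine Finset.mem_erase.2 ⟨fun h ↦ hpB ?_, Finset.mem_filter.2 ⟨Finset.mem_univ _, ?_⟩⟩
    · rw [← Finset.mem_coe, ← block_sup_block_apply_of_mem (hdisj B) haB, h]
      exact Or.inr ⟨hp, ha⟩
    · rw [block_pair_sup_block_sup_block (hdisj B) haB (by simp [hp, hpB]), ← Finset.coe_union,
        Finset.union_sdiff_of_subset hBA]
  · exact hsplit Q (Finset.mem_filter.1 (Finset.mem_of_mem_erase hQ)).2
  · simp only [Finset.mem_filter, Finset.mem_powerset] at hB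
    ext u
    rw [Finset.mem_filter, block_sup_block_apply_of_mem (hdisj B) hB.2.1, Finset.mem_coe]
    exact and_iff_right_of_imp fun hu ↦ hB.1 hu
  · rw [hsplit Q (Finset.mem_filter.1 (Finset.mem_of_mem_erase hQ)).2]

end BlockDecompositions

section BlockSums

variable {α : Type*} {A : Finset α} {a p : α}

open scoped Classical in
lemma sum_block_pair_sup_eq_zero [Finite α] (ha : a ∉ A) (hap : a ≠ p) (f : Setoid α → ℚ) :
    ∑ Q with block {a, p} ⊔ Q = block ↑A, f Q = 0 := by
  refine Finset.sum_eq_zero fun Q hQ ↦ ?_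
  have hle : block {a, p} ≤ block ↑A := (Finset.mem_filter.1 hQ).2 ▸ le_sup_left
  exact ((block_pair_le_iff.1 hle).elim hap fun h ↦ ha h.1).elim

open scoped Classical in
lemma sum_block_pair_sup_eq_block [Finite α] (ha : a ∈ A) (hp : p ∈ A) {f : Setoid α → ℚ}
    (hf : ∀ Q, f Q ≠ 0 → Q a p) :
    ∑ Q with block {a, p} ⊔ Q = block ↑A, f Q = f (block ↑A) := by
  rw [sum_block_pair_sup_eq ha hp, add_eq_left]
  refine Finset.sum_eq_zero fun B hB ↦ ?_
  obtain ⟨haB, hpB⟩ := (Finset.mem_filter.1 hB).2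
  by_contra hne
  have hpa := Setoid.symm' _ (hf _ hne)
  exact hpB ((block_sup_block_apply_of_mem (Finset.disjoint_coe.2 Finset.disjoint_sdiff) haB).1 hpa)

open scoped Classical in
lemma sum_block_pair_sup_eq_sum_Icc [Finite α] [DecidableEq α] {B₀ C₀ : Finset α}
    (ha : a ∈ B₀) (hp : p ∈ C₀) (hB₀ : B₀ ⊆ A) (hC₀ : C₀ ⊆ A) {f : Setoid α → ℚ}
    (hfA : f (block ↑A) = 0)
    (hf : ∀ Q, f Q ≠ 0 → (∀ u ∈ B₀, Q u a) ∧ ∀ u ∈ C₀, Q u p) :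
    ∑ Q with block {a, p} ⊔ Q = block ↑A, f Q =
      ∑ B ∈ Finset.Icc B₀ (A \ C₀), f (block ↑B ⊔ block ↑(A \ B)) := by
  rw [sum_block_pair_sup_eq (hB₀ ha) (hC₀ hp), hfA, zero_add]
  refine (Finset.sum_subset (fun B hB ↦ ?_) fun B hB hB' ↦ ?_).symm
  · obtain ⟨hB₀B, hBA⟩ := Finset.mem_Icc.1 hB
    exact Finset.mem_filter.2 ⟨Finset.mem_powerset.2 (hBA.trans Finset.sdiff_subset), hB₀B ha,
      fun hpB ↦ (Finset.mem_sdiff.1 (hBA hpB)).2 hp⟩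
  · obtain ⟨hBA, haB, hpB⟩ := Finset.mem_filter.1 hB
    have hd : Disjoint (B : Set α) ↑(A \ B) := Finset.disjoint_coe.2 Finset.disjoint_sdiff
    by_contra hne
    obtain ⟨hQa, hQp⟩ := hf _ hne
    have hB₀B : B₀ ⊆ B := fun u hu ↦ (block_sup_block_apply_of_mem hd haB).1 (hQa u hu)
    have hC₀B (u : α) (hu : u ∈ C₀) : u ∈ A \ B := by
      refine (block_sup_block_apply_of_mem (a := p) hd.symm (by simp [hC₀ hp, hpB])).1 ?_
      rw [sup_comm]
      exact hQp u hu
    exact hB' (Finset.mem_Icc.2 ⟨hB₀B, fun u hu ↦ Finset.mem_sdiff.2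
      ⟨Finset.mem_powerset.1 hBA hu, fun huC ↦ (Finset.mem_sdiff.1 (hC₀B u huC)).2 hu⟩⟩)

lemma sum_Icc_eq_sum_choose [DecidableEq α] {S T : Finset α} {E : ℕ} (hST : S ⊆ T)
    (hE : T.card = S.card + E) {F : Finset α → ℚ} {g : ℕ → ℚ}
    (h : ∀ B ∈ Finset.Icc S T, ∀ s, B.card = S.card + s → F B = g s) :
    ∑ B ∈ Finset.Icc S T, F B = ∑ s ∈ Finset.range (E + 1), (E.choose s : ℚ) * g s := by
  have hcard : (T \ S).card = E := by
    rw [Finset.card_sdiff_of_subset hST]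
    lia
  have hdisj {U : Finset α} (hU : U ∈ (T \ S).powerset) : Disjoint S U :=
    Finset.disjoint_of_subset_right (Finset.mem_powerset.1 hU) Finset.disjoint_sdiff
  rw [Finset.Icc_eq_image_powerset hST, Finset.sum_image]
  · have hF : ∀ U ∈ (T \ S).powerset, F (S ∪ U) = g U.card := fun U hU ↦ by
      refine h _ ?_ _ (Finset.card_union_of_disjoint (hdisj hU))
      rw [Finset.Icc_eq_image_powerset hST]
      exact Finset.mem_image_of_mem _ hU
    rw [Finset.sum_congr rfl hF, Finset.sum_powerset_apply_card, hcard]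
    simp only [nsmul_eq_mul]
  · intro U hU V hV hUV
    dsimp only at hUV
    rw [← Finset.union_sdiff_cancel_left (hdisj hU), hUV,
      Finset.union_sdiff_cancel_left (hdisj hV)]

end BlockSums

section Recursion

open Finset.HasAntidiagonal (antidiagonal)

lemma sum_choose_mul_factorial_mul_factorial (E : ℕ) (c : ℚ) (F : ℕ → ℕ → ℚ) :
    ∑ s ∈ Finset.range (E + 1),
        (E.choose s : ℚ) * (c * (s.factorial * (E - s).factorial) * F s (E - s)) =
      c * E.factorial * ∑ j ∈ antidiagonal E, F j.1 j.2 := by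
  rw [Finset.Nat.sum_antidiagonal_eq_sum_range_succ F, Finset.mul_sum]
  refine Finset.sum_congr rfl fun s hs ↦ ?_
  rw [← Nat.choose_mul_factorial_mul_factorial (Finset.mem_range_succ_iff.1 hs)]
  push_cast
  ring

variable {α : Type*} [Fintype α] [DecidableEq α]

/-- The evaluation of `starWordCount` for `k` star transpositions at `p`, when the target
permutation is a cycle through `p` inside a block of size at most `N`. The block is the support of
the cycle together with `E` further points. -/
def StarWordCountFormula (p : α) (k N : ℕ) : Prop :=
  ∀ ⦃A : Finset α⦄ ⦃L : List α⦄ ⦃E m : ℕ⦄, A.card ≤ N → (p :: L).Nodup → (∀ u ∈ p :: L, u ∈ A) →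
    A.card = L.length + 1 + E → k + m + 1 = L.length + 1 + 2 * E →
    starWordCount p k m (p :: L).formPerm (block ↑A) =
      m.factorial * E.factorial * starCoeff (L.length + 1) E k

variable (α) in
/-- The evaluation of `wordCount` when the target permutation is a cycle inside a block of size less
than `N`. The block is the support of the cycle together with `E` further points. -/
def WordCountFormula (N : ℕ) : Prop :=
  ∀ ⦃A : Finset α⦄ ⦃x : α⦄ ⦃L : List α⦄ ⦃E m : ℕ⦄, A.card < N → (x :: L).Nodup →
    (∀ u ∈ x :: L, u ∈ A) → A.card = L.length + 1 + E → m + 1 = L.length + 1 + 2 * E →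
    wordCount m (x :: L).formPerm (block ↑A) =
      m.factorial * E.factorial * hurwitzCoeff (L.length + 1) E

variable {A : Finset α} {a p : α} {L L₁ L₂ : List α} {k m N E : ℕ}

/-- By the Riemann–Hurwitz inequality, the only contributing shuffles are those in which both
factors have genus zero; this determines how many letters act on `B`. -/
lemma starWordCount_formPerm_mul_formPerm (hstar : StarWordCountFormula p k N)
    (hword : WordCountFormula α N) {B C : Finset α} (hBC : Disjoint B C) (hN : B.card + C.card ≤ N)
    (hnB : (a :: L₂).Nodup) (hnC : (p :: L₁).Nodup) (hB : ∀ u ∈ a :: L₂, u ∈ B)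
    (hC : ∀ u ∈ p :: L₁, u ∈ C) {s t : ℕ} (hs : B.card = L₂.length + 1 + s)
    (ht : C.card = L₁.length + 1 + t)
    (hm : k + m + 2 = L₁.length + 1 + (L₂.length + 1) + 2 * (s + t)) :
    starWordCount p k m ((a :: L₂).formPerm * (p :: L₁).formPerm) (block ↑B ⊔ block ↑C) =
      m.factorial * (s.factorial * t.factorial) *
        (hurwitzCoeff (L₂.length + 1) s * starCoeff (L₁.length + 1) t k) := by
  have hBne : B.Nonempty := ⟨a, hB a List.mem_cons_self⟩
  have hCne : C.Nonempty := ⟨p, hC p List.mem_cons_self⟩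
  have hlower {i : ℕ} (h : wordCount i (a :: L₂).formPerm (block ↑B) ≠ 0) :
      L₂.length + 2 * s ≤ i := by
    have := two_mul_card_le_of_formPerm hBne (genusNonneg_of_wordCount_ne_zero h)
    lia
  have hupper {j : ℕ} (h : starWordCount p k j (p :: L₁).formPerm (block ↑C) ≠ 0) :
      L₁.length + 2 * t ≤ k + j := by
    have := two_mul_card_le_of_formPerm hCne (genusNonneg_of_starWordCount_ne_zero h)
    lia
  rw [starWordCount_block_sup_block (Finset.disjoint_coe.2 hBC) (hC p List.mem_cons_self)
    (sameCycle_setoid_formPerm_le_block hB) (sameCycle_setoid_formPerm_le_block hC)]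
  by_cases hi : L₂.length + 2 * s ≤ m
  · rw [Finset.sum_eq_single_of_mem (L₂.length + 2 * s) (Finset.mem_range_succ_iff.2 hi),
      hword (by have := hCne.card_pos; lia) hnB hB hs (by lia),
      hstar (by lia) hnC hC ht (by lia), ← Nat.choose_mul_factorial_mul_factorial hi]
    · push_cast
      ring
    · intro i hi' hne
      have him := Finset.mem_range_succ_iff.1 hi'
      by_contra h
      have h₁ := hlower (left_ne_zero_of_mul (right_ne_zero_of_mul h))
      have h₂ := hupper (right_ne_zero_of_mul (right_ne_zero_of_mul h))
      lia
  · rw [starCoeff_eq_zero (by lia), mul_zero, mul_zero]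
    refine Finset.sum_eq_zero fun i hi' ↦ ?_
    have him := Finset.mem_range_succ_iff.1 hi'
    by_contra h
    have h₁ := hlower (left_ne_zero_of_mul (right_ne_zero_of_mul h))
    lia

lemma sum_Icc_starWordCount (hstar : StarWordCountFormula p k N) (hword : WordCountFormula α N)
    (hN : A.card ≤ N) (hnB : (a :: L₂).Nodup) (hnC : (p :: L₁).Nodup)
    (hdisj : (p :: L₁).Disjoint (a :: L₂)) (hB₀ : (a :: L₂).toFinset ⊆ A)
    (hC₀ : (p :: L₁).toFinset ⊆ A) (hA : A.card = L₁.length + 1 + (L₂.length + 1) + E)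
    (hm : k + m + 2 = L₁.length + 1 + (L₂.length + 1) + 2 * E) :
    ∑ B ∈ Finset.Icc (a :: L₂).toFinset (A \ (p :: L₁).toFinset),
      starWordCount p k m ((a :: L₂).formPerm * (p :: L₁).formPerm) (block ↑B ⊔ block ↑(A \ B)) =
    m.factorial * E.factorial * ∑ j ∈ antidiagonal E,
      hurwitzCoeff (L₂.length + 1) j.1 * starCoeff (L₁.length + 1) j.2 k := by
  have hd : Disjoint (a :: L₂).toFinset (p :: L₁).toFinset :=
    (List.disjoint_toFinset_iff_disjoint.2 hdisj).symm
  have hcB : (a :: L₂).toFinset.card = L₂.length + 1 := List.toFinset_card_of_nodup hnB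
  have hcC : (p :: L₁).toFinset.card = L₁.length + 1 := List.toFinset_card_of_nodup hnC
  have hcard : (A \ (p :: L₁).toFinset).card = (a :: L₂).toFinset.card + E := by
    rw [Finset.card_sdiff_of_subset hC₀]
    lia
  rw [sum_Icc_eq_sum_choose (Finset.subset_sdiff.2 ⟨hB₀, hd⟩) hcard fun B hB s hs ↦ ?_,
    sum_choose_mul_factorial_mul_factorial E (m.factorial : ℚ)
    fun i j ↦ hurwitzCoeff (L₂.length + 1) i * starCoeff (L₁.length + 1) j k]
  obtain ⟨hB₀B, hBA⟩ := Finset.mem_Icc.1 hB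
  have hBcard := Finset.card_le_card hBA
  have hAB := Finset.card_sdiff_add_card_eq_card (hBA.trans Finset.sdiff_subset)
  refine starWordCount_formPerm_mul_formPerm hstar hword Finset.disjoint_sdiff (by lia) hnB hnC
    (fun u hu ↦ hB₀B (List.mem_toFinset.2 hu)) (fun u hu ↦ ?_) (by lia) (by lia) (by lia)
  exact Finset.mem_sdiff.2 ⟨hC₀ (List.mem_toFinset.2 hu), fun huB ↦
    (Finset.mem_sdiff.1 (hBA huB)).2 (List.mem_toFinset.2 hu)⟩

open scoped Classical in
lemma sum_starWordCount_swap_mul_of_mem (hstar : StarWordCountFormula p k N)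
    (hword : WordCountFormula α N) (hN : A.card ≤ N) (hn : ((p :: L₁) ++ a :: L₂).Nodup)
    (hL : ∀ u ∈ (p :: L₁) ++ a :: L₂, u ∈ A)
    (hA : A.card = L₁.length + 1 + (L₂.length + 1) + E)
    (hm : k + m + 2 = L₁.length + 1 + (L₂.length + 1) + 2 * E) :
    ∑ Q with block {a, p} ⊔ Q = block ↑A,
      starWordCount p k m (swap a p * ((p :: L₁) ++ a :: L₂).formPerm) Q =
    m.factorial * E.factorial * ∑ j ∈ antidiagonal E,
      hurwitzCoeff (L₂.length + 1) j.1 * starCoeff (L₁.length + 1) j.2 k := by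
  obtain ⟨hnC, hnB, hdisj⟩ := List.nodup_append'.1 hn
  have hB₀ : (a :: L₂).toFinset ⊆ A := fun u hu ↦
    hL u (List.mem_append_right _ (List.mem_toFinset.1 hu))
  have hC₀ : (p :: L₁).toFinset ⊆ A := fun u hu ↦
    hL u (List.mem_append_left _ (List.mem_toFinset.1 hu))
  rw [swap_mul_formPerm_append hn, sum_block_pair_sup_eq_sum_Icc (B₀ := (a :: L₂).toFinset)
    (C₀ := (p :: L₁).toFinset) (by simp) (by simp) hB₀ hC₀]
  · exact sum_Icc_starWordCount hstar hword hN hnB hnC hdisj hB₀ hC₀ hA hm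
  · by_contra h
    have := two_mul_card_le_of_formPerm_mul_formPerm ⟨p, hC₀ (by simp)⟩
      (genusNonneg_of_starWordCount_ne_zero h)
    lia
  · intro Q hQ
    simp only [List.mem_toFinset]
    exact rel_of_sameCycle_setoid_formPerm_mul_formPerm_le hnB hnC hdisj.symm List.mem_cons_self
      List.mem_cons_self (genusNonneg_of_starWordCount_ne_zero hQ).1

open scoped Classical in
lemma sum_starWordCount_swap_mul_of_notMem (hstar : StarWordCountFormula p k N) (hN : A.card ≤ N)
    (ha : a ∈ A) (haL : a ∉ p :: L) (hn : (p :: L).Nodup) (hL : ∀ u ∈ p :: L, u ∈ A)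
    (hA : A.card = L.length + 1 + (E + 1)) (hm : k + m + 2 = L.length + 1 + 2 * (E + 1)) :
    ∑ Q with block {a, p} ⊔ Q = block ↑A, starWordCount p k m (swap a p * (p :: L).formPerm) Q =
      m.factorial * E.factorial * starCoeff (L.length + 2) E k := by
  have hn' : (p :: (L ++ [a])).Nodup := by
    rw [← List.cons_append, List.nodup_append_comm]
    exact List.nodup_cons.2 ⟨haL, hn⟩
  rw [← formPerm_append_singleton hn', sum_block_pair_sup_eq_block ha (hL p List.mem_cons_self)]
  · rw [hstar (E := E) hN hn' _ _ _]
    · simp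
    · simpa [or_imp, forall_and, ha] using hL
    all_goals
      simp only [List.length_append, List.length_singleton]
      lia
  · intro Q hQ
    exact rel_of_sameCycle_setoid_formPerm_le (genusNonneg_of_starWordCount_ne_zero hQ).1 hn'
      (by simp) (by simp)

lemma sameCycle_setoid_le_block_compl {α : Type*} {τ : Perm α} {p : α} (h : τ p = p) :
    Perm.SameCycle.setoid τ ≤ block {p}ᶜ := by
  refine sameCycle_setoid_le_iff.2 fun u ↦ ?_
  by_cases hu : u = p
  · exact Or.inl (by rw [hu, h])
  · exact Or.inr ⟨hu, fun hτu ↦ hu (τ.injective (by rw [h]; exact hτu))⟩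

open scoped Classical in
lemma le_block_compl_of_starWordCount_zero_ne_zero {σ : Perm α} {P : Setoid α}
    (h : starWordCount p 0 m σ P ≠ 0) : P ≤ block {p}ᶜ := by
  rw [starWordCount, pow_zero, ← pow_zero (wordSum ∅)] at h
  refine (isWithin_of_coeff_ne_zero (fun τ hτ ↦ ?_) h).2
  have hfix := hτ.resolve_left (Finset.notMem_empty τ)
  exact sameCycle_setoid_le_block_compl (mem_fixingSwaps.1 hfix).2

lemma starWordCount_zero_zero_one_bot (p : α) : starWordCount p 0 0 1 ⊥ = 1 := by
  rw [starWordCount, pow_zero, pow_zero, mul_one, MonoidAlgebra.one_def]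
  exact Finsupp.single_eq_same

lemma starWordCountFormula_zero (p : α) (N : ℕ) : StarWordCountFormula p 0 N := by
  intro A L E m _ hn hL hA hm
  have hpA : p ∈ A := hL p List.mem_cons_self
  rw [starCoeff_zero_right]
  split_ifs with h
  · obtain ⟨hl, rfl⟩ := h
    obtain rfl : L = [] := List.length_eq_zero_iff.1 (by lia)
    obtain rfl : m = 0 := by simpa using hm
    obtain rfl : A = {p} := (Finset.card_eq_one.1 (by simpa using hA)).elim fun x hx ↦ by
      rw [hx, Finset.mem_singleton] at hpA
      rw [hx, hpA]
    have hblock : block (({p} : Finset α) : Set α) = ⊥ := by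
      rw [eq_bot_iff, block_le_iff]
      simp
    rw [hblock, List.formPerm_singleton, starWordCount_zero_zero_one_bot]
    simp
  · rw [mul_zero]
    by_contra hne
    have hle := block_le_iff.1 (le_block_compl_of_starWordCount_zero_ne_zero hne)
    have hAp : A = {p} := Finset.eq_singleton_iff_unique_mem.2 ⟨hpA, fun u hu ↦
      (hle u hu p hpA).resolve_right fun hp ↦ hp.2 rfl⟩
    rw [hAp, Finset.card_singleton] at hA
    lia

lemma sum_toFinset_eq_sum_antidiagonal {α : Type*} [DecidableEq α] {L : List α} (hL : L.Nodup)
    {f : α → ℚ} {W : ℕ → ℕ → ℚ} (hleft : ∀ j, W 0 j = 0) (hright : ∀ i, W i 0 = 0)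
    (h : ∀ L₁ a L₂, L = L₁ ++ a :: L₂ → f a = W (L₂.length + 1) (L₁.length + 1)) :
    ∑ a ∈ L.toFinset, f a = ∑ i ∈ antidiagonal (L.length + 1), W i.1 i.2 := by
  rw [← Finset.Nat.sum_antidiagonal_swap]
  simp only [Prod.fst_swap, Prod.snd_swap]
  rw [List.sum_toFinset f hL, ← Fin.sum_univ_fun_getElem,
    Finset.Nat.sum_antidiagonal_eq_sum_range_succ fun i j ↦ W j i, Finset.sum_range_succ,
    Nat.sub_self, hleft, add_zero, Finset.sum_range_succ', hright, add_zero,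
    ← Fin.sum_univ_eq_sum_range fun i ↦ W (L.length + 1 - (i + 1)) (i + 1)]
  refine Finset.sum_congr rfl fun i _ ↦ ?_
  have hsplit : L = L.take i ++ L[(i : ℕ)] :: L.drop (i + 1) := by
    rw [List.cons_getElem_drop_succ, List.take_append_drop]
  rw [h _ _ _ hsplit, List.length_drop, List.length_take]
  congr 1 <;> lia

lemma sum_univ_erase_eq_sum_toFinset_add (hn : (p :: L).Nodup) (hL : ∀ u ∈ p :: L, u ∈ A)
    {f : α → ℚ} (hf : ∀ a ∉ A, a ≠ p → f a = 0) :
    ∑ a ∈ Finset.univ.erase p, f a =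
      ∑ a ∈ L.toFinset, f a + ∑ a ∈ A \ (p :: L).toFinset, f a := by
  have hpL := (List.nodup_cons.1 hn).1
  rw [← Finset.sum_union (Finset.disjoint_left.2 fun u hu hu' ↦ by simp_all)]
  refine (Finset.sum_subset (fun u hu ↦ ?_) fun u hu hu' ↦ ?_).symm
  · refine Finset.mem_erase.2 ⟨?_, Finset.mem_univ u⟩
    rintro rfl
    simp [hpL] at hu
  · refine hf u (fun huA ↦ hu' ?_) (Finset.ne_of_mem_erase hu)
    simp [huA, Finset.ne_of_mem_erase hu, em]

lemma StarWordCountFormula.succ (hstar : StarWordCountFormula p k N)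
    (hword : WordCountFormula α N) : StarWordCountFormula p (k + 1) N := by
  intro A L E m hN hn hL hA hm
  have hcard : (A \ (p :: L).toFinset).card = E := by
    rw [Finset.card_sdiff_of_subset fun u hu ↦ hL u (List.mem_toFinset.1 hu),
      List.toFinset_card_of_nodup hn, List.length_cons]
    lia
  rw [starWordCount_succ, starCoeff_succ, mul_add,
    sum_univ_erase_eq_sum_toFinset_add hn hL fun a ha hap ↦ sum_block_pair_sup_eq_zero ha hap _]
  congr 1
  · rw [sum_toFinset_eq_sum_antidiagonal (List.nodup_cons.1 hn).2 (W := fun i j ↦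
      m.factorial * E.factorial * ∑ e ∈ antidiagonal E, hurwitzCoeff i e.1 * starCoeff j e.2 k),
      Finset.mul_sum]
    · simp [hurwitzCoeff_zero_left]
    · simp [starCoeff_zero_left]
    · rintro L₁ a L₂ rfl
      rw [List.length_append, List.length_cons] at hA hm
      exact sum_starWordCount_swap_mul_of_mem hstar hword hN hn hL (by lia) (by lia)
  · rcases E with _ | E
    · rw [Finset.card_eq_zero.1 hcard, Finset.sum_empty, if_pos rfl, mul_zero]
    · rw [Finset.sum_eq_card_nsmul (b := m.factorial * E.factorial * starCoeff (L.length + 2) E k),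
        hcard, nsmul_eq_mul, if_neg E.succ_ne_zero, Nat.add_sub_cancel, Nat.factorial_succ]
      · push_cast
        ring
      · intro a ha
        rw [Finset.mem_sdiff, List.mem_toFinset] at ha
        exact sum_starWordCount_swap_mul_of_notMem hstar hN ha.1 ha.2 hn hL (by lia) (by lia)

lemma WordCountFormula.starWordCountFormula (hword : WordCountFormula α N) (p : α) (k : ℕ) :
    StarWordCountFormula p k N := by
  induction k with
  | zero => exact starWordCountFormula_zero p N
  | succ k ih => exact ih.succ hword

lemma WordCountFormula.succ (hword : WordCountFormula α N) : WordCountFormula α (N + 1) := by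
  intro A x L E m hN hn hL hA hm
  rw [wordCount_eq_sum_starWordCount x, ← sum_starCoeff_div_factorial, ← hm, Finset.mul_sum]
  refine Finset.sum_congr rfl fun k hk ↦ ?_
  have hkm : k ≤ m := Finset.mem_range_succ_iff.1 hk
  rw [hword.starWordCountFormula x k (by lia) hn hL hA (by lia),
    ← Nat.choose_mul_factorial_mul_factorial hkm]
  have hk : (k.factorial : ℚ) ≠ 0 := by positivity
  push_cast
  field_simp

lemma wordCountFormula (α : Type*) [Fintype α] [DecidableEq α] (N : ℕ) : WordCountFormula α N := by
  induction N with
  | zero => exact fun A _ _ _ _ hA ↦ absurd hA A.card.not_lt_zero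
  | succ N ih => exact ih.succ

theorem wordCount_formPerm (hn : L.Nodup) (hL : ∀ u ∈ L, u ∈ A) (hne : L ≠ [])
    (hA : A.card = L.length + E) (hm : m + 1 = L.length + 2 * E) :
    wordCount m L.formPerm (block ↑A) = m.factorial * E.factorial * hurwitzCoeff L.length E := by
  obtain ⟨x, L, rfl⟩ := List.exists_cons_of_ne_nil hne
  exact wordCountFormula α (A.card + 1) A.card.lt_succ_self hn hL hA hm

end Recursion

section Words

variable {α : Type*}

lemma sum_pow_eq_sum_prod_ofFn {R ι : Type*} [Semiring R] (s : Finset ι) (f : ι → R) (m : ℕ) :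
    (∑ i ∈ s, f i) ^ m =
      ∑ t ∈ Fintype.piFinset fun _ : Fin m ↦ s, (List.ofFn fun i ↦ f (t i)).prod := by
  induction m with
  | zero => simp
  | succ m ih =>
    rw [pow_succ', ih, Finset.sum_mul_sum, ← Finset.sum_product']
    refine Finset.sum_equiv (Fin.consEquiv fun _ ↦ ι) (fun t ↦ ?_) fun t _ ↦ ?_
    · simp [Fin.consEquiv, Fin.forall_fin_succ]
    · simp [Fin.consEquiv, List.ofFn_succ]

lemma TrackedPerm.perm_prod_map_ofPerm (l : List (Perm α)) :
    (l.map ofPerm).prod.perm = l.prod := by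
  induction l with
  | nil => rfl
  | cons τ l ih => rw [List.map_cons, List.prod_cons, perm_mul, ih, perm_ofPerm, List.prod_cons]

lemma orbitRel_closure_le_iff {S : Set (Perm α)} {P : Setoid α} :
    MulAction.orbitRel (Subgroup.closure S) α ≤ P ↔ ∀ τ ∈ S, Perm.SameCycle.setoid τ ≤ P := by
  constructor
  · intro h τ hτ
    refine sameCycle_setoid_le_iff.2 fun u ↦ h (Setoid.symm' _ ?_)
    exact ⟨⟨τ, Subgroup.subset_closure hτ⟩, rfl⟩
  · rintro h - v ⟨⟨g, hg⟩, rfl⟩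
    suffices hle : Perm.SameCycle.setoid g ≤ P from P.symm' (sameCycle_setoid_le_iff.1 hle v)
    induction hg using Subgroup.closure_induction with
    | mem τ hτ => exact h τ hτ
    | one => exact sameCycle_setoid_one.trans_le bot_le
    | mul σ τ _ _ hσ hτ => exact (sameCycle_setoid_mul_le σ τ).trans (sup_le hσ hτ)
    | inv τ _ hτ => rwa [sameCycle_setoid_inv]

lemma orbitRel_closure_eq_top_iff {S : Set (Perm α)} :
    MulAction.orbitRel (Subgroup.closure S) α = ⊤ ↔
      ∀ x y, ∃ g ∈ Subgroup.closure S, g x = y := by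
  rw [Setoid.eq_top_iff]
  refine ⟨fun h x y ↦ ?_, fun h x y ↦ ?_⟩
  · obtain ⟨⟨g, hg⟩, hgx⟩ := h y x
    exact ⟨g, hg, hgx⟩
  · obtain ⟨g, hg, hgx⟩ := h y x
    exact ⟨⟨g, hg⟩, hgx⟩

lemma TrackedPerm.partition_prod_map_ofPerm (l : List (Perm α)) :
    (l.map ofPerm).prod.partition = MulAction.orbitRel (Subgroup.closure {τ | τ ∈ l}) α := by
  refine eq_of_forall_ge_iff fun P ↦ ?_
  rw [orbitRel_closure_le_iff]
  induction l with
  | nil => simp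
  | cons τ l ih => simp [ih]

lemma mul_prod_eq_one_and_transitive_iff {σ : Perm α} {l : List (Perm α)} :
    (σ * l.prod = 1 ∧ ∀ x y, ∃ g ∈ Subgroup.closure ({σ} ∪ {τ | τ ∈ l}), g x = y) ↔
      (l.map TrackedPerm.ofPerm).prod = ⟨σ⁻¹, ⊤⟩ := by
  rw [TrackedPerm.ext_iff, TrackedPerm.perm_prod_map_ofPerm,
    TrackedPerm.partition_prod_map_ofPerm, mul_eq_one_iff_eq_inv', ← orbitRel_closure_eq_top_iff]
  refine and_congr_right fun hl ↦ ?_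
  have hσ : σ ∈ Subgroup.closure {τ | τ ∈ l} := by
    rw [← inv_mem_iff, ← hl]
    exact Subgroup.list_prod_mem _ fun τ hτ ↦ Subgroup.subset_closure hτ
  rw [Subgroup.closure_union,
    sup_eq_right.2 ((Subgroup.closure_le _).2 (Set.singleton_subset_iff.2 hσ))]

open scoped Classical in
lemma wordCount_eq_card [Fintype α] [DecidableEq α] (m : ℕ) (σ : Perm α) (P : Setoid α) :
    wordCount m σ P = Finset.card {t : Fin m → Perm α | (∀ i, (t i).IsSwap) ∧
      ((List.ofFn t).map TrackedPerm.ofPerm).prod = ⟨σ, P⟩} := by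
  have hprod (t : Fin m → Perm α) :
      (List.ofFn fun i ↦ MonoidAlgebra.single (TrackedPerm.ofPerm (t i)) (1 : ℚ)).prod =
        MonoidAlgebra.single ((List.ofFn t).map TrackedPerm.ofPerm).prod 1 := by
    rw [← MonoidAlgebra.of_apply, map_list_prod, List.map_map, List.map_ofFn]
    rfl
  rw [wordCount, wordSum, sum_pow_eq_sum_prod_ofFn, MonoidAlgebra.coeff_sum,
    Finsupp.finsetSum_apply, ← Finset.filter_filter, Finset.natCast_card_filter]
  refine Finset.sum_congr ?_ fun t _ ↦ ?_
  · ext t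
    simp
  · rw [hprod, MonoidAlgebra.coeff_single, Finsupp.single_apply]

open scoped Classical in
lemma natCard_transitive_factorizations [Fintype α] [DecidableEq α] (q : Perm α → Prop)
    [DecidablePred q] (m : ℕ) :
    (Nat.card {p : Perm α × (Fin m → Perm α) // q p.1 ∧ (∀ i, (p.2 i).IsSwap) ∧
      p.1 * (List.ofFn p.2).prod = 1 ∧
      ∀ x y, ∃ g ∈ Subgroup.closure ({p.1} ∪ Set.range p.2), g x = y} : ℚ) =
    ∑ σ with q σ, wordCount m σ⁻¹ ⊤ := by
  have hrange (t : Fin m → Perm α) : Set.range t = {τ | τ ∈ List.ofFn t} := by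
    ext
    simp
  simp only [hrange, mul_prod_eq_one_and_transitive_iff]
  rw [Nat.card_eq_fintype_card, Fintype.card_subtype, Finset.natCast_card_filter,
    Fintype.sum_prod_type, Finset.sum_filter]
  refine Finset.sum_congr rfl fun σ _ ↦ ?_
  rw [wordCount_eq_card, Finset.natCast_card_filter]
  split_ifs with hσ <;> simp [hσ]

end Words

section CycleType

variable {α : Type*} [Fintype α] [DecidableEq α]

lemma exists_formPerm_eq_of_cycleType_eq_singleton {σ : Perm α} {r : ℕ}
    (hσ : σ.cycleType = {r}) :
    ∃ L : List α, L.Nodup ∧ L ≠ [] ∧ L.length = r ∧ L.formPerm = σ := by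
  have hcycle : σ.IsCycle := by
    rw [← Perm.card_cycleType_eq_one, hσ, Multiset.card_singleton]
  have hsupport : σ.support.card = r := by
    rw [← Perm.sum_cycleType, hσ, Multiset.sum_singleton]
  obtain ⟨x, hx, -⟩ := id hcycle
  refine ⟨σ.toList x, σ.nodup_toList x, ?_, ?_, ?_⟩
  · simpa using hx
  · rw [Perm.length_toList, hcycle.cycleOf_eq hx, hsupport]
  · rw [Perm.formPerm_toList, hcycle.cycleOf_eq hx]

lemma wordCount_top_of_cycleType_eq_singleton {σ : Perm α} {r m : ℕ} (hσ : σ.cycleType = {r})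
    (hm : m + r + 1 = 2 * Fintype.card α) :
    wordCount m σ ⊤ =
      m.factorial * (Fintype.card α - r).factorial * hurwitzCoeff r (Fintype.card α - r) := by
  obtain ⟨L, hn, hne, rfl, rfl⟩ := exists_formPerm_eq_of_cycleType_eq_singleton hσ
  have hcard : L.length ≤ Fintype.card α := hn.length_le_card
  have htop : (⊤ : Setoid α) = block ↑(Finset.univ : Finset α) := by
    ext
    simp [block_apply]
  rw [htop]
  refine wordCount_formPerm hn (fun u _ ↦ Finset.mem_univ u) hne ?_ (by lia)
  rw [Finset.card_univ]
  lia

end CycleType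

end HurwitzNumber

open HurwitzNumber in
theorem hurwitz_number_3_1_general {α : Type*} [Fintype α] [DecidableEq α] {r m : ℕ} (hr : 2 ≤ r)
    (hrn : r ≤ Fintype.card α) (hm : m + r + 1 = 2 * Fintype.card α) :
    (Nat.card {p : Perm α × (Fin m → Perm α) // p.1.cycleType = {r} ∧ (∀ i, (p.2 i).IsSwap) ∧
      p.1 * (List.ofFn p.2).prod = 1 ∧
      ∀ x y, ∃ g ∈ Subgroup.closure ({p.1} ∪ Set.range p.2), g x = y} : ℚ) =
    (Fintype.card α).factorial * (r ^ r / r.factorial) *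
      (m.factorial / (Fintype.card α - r).factorial) *
      (Fintype.card α : ℚ) ^ ((Fintype.card α : ℤ) - r - 2) := by
  obtain ⟨E, hE⟩ := Nat.exists_eq_add_of_le hrn
  have hcount (σ : Perm α) (hσ : σ.cycleType = {r}) :
      wordCount m σ⁻¹ ⊤ = m.factorial * E.factorial * hurwitzCoeff r E := by
    rw [wordCount_top_of_cycleType_eq_singleton (σ.cycleType_inv.trans hσ) hm, hE,
      Nat.add_sub_cancel_left]
  rw [natCard_transitive_factorizations (fun σ ↦ σ.cycleType = {r}) m,
    Finset.sum_congr rfl fun σ hσ ↦ hcount σ (Finset.mem_filter.1 hσ).2, Finset.sum_const,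
    nsmul_eq_mul, Perm.card_of_cycleType_singleton hr hrn, Nat.cast_mul, Nat.cast_choose ℚ hrn,
    hurwitzCoeff, hE, Nat.add_sub_cancel_left, ← Nat.mul_factorial_pred (by lia : r ≠ 0)]
  push_cast
  rw [show (r + E - r - 2 : ℤ) = E - 2 by ring]
  have hr0 : (r : ℚ) ≠ 0 := by positivity
  field_simp
  ring

/-- Genus-zero Hurwitz number h_{3^1}: one branch point of cycle type (4,1^{n-4}) and 2n-5 transpositions; h_{3^1} = (32/3) * ((2n-5)!/(n-4)!) * n^(n-6). -/
theorem hurwitz_number_3_1 (n : ℕ) (hn : 4 ≤ n) :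
    (Nat.card {p : Perm (Fin n) × (Fin (2 * n - 5) → Perm (Fin n)) //
        p.1.cycleType = {4} ∧
        (∀ i, (p.2 i).IsSwap) ∧
        p.1 * (List.ofFn p.2).prod = 1 ∧
        (∀ x y : Fin n, ∃ g ∈ Subgroup.closure ({p.1} ∪ Set.range p.2),
          g x = y)} : ℚ) =
      (n.factorial : ℚ) * (32 / 3) *
        (((2 * n - 5).factorial : ℚ) / ((n - 4).factorial : ℚ)) *
        (n : ℚ) ^ ((n : ℤ) - 6) := by
  rw [hurwitz_number_3_1_general (r := 4) (by simp) (by simpa) (by simp; lia), Fintype.card_fin]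
  norm_num [Nat.factorial, sub_sub]
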